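/- Let u be an AB-entropy solution of u_t + f(x,u)_x = 0 on ℝ × [0,∞). Then the set-valued map x ↦ C_0(u,x) has closed graph: if x_n → x in ℝ, y_n ∈ C_0(u, x_n) for every n, and y_n → y in ℝ, then y ∈ C_0(u, x). -/

import Mathlib

open MeasureTheory Set Filter

noncomputable section

/-- The discontinuous flux `f(x,u) = f_l(u)` for `x < 0`, `f_r(u)` for `x > 0`
(the value at the interface is taken to be `f_r(u)`). -/
def dflux (fl fr : ℝ → ℝ) (x u : ℝ) : ℝ := if x < 0 then fl u else fr u

/-- The connection function `c^{AB}`. -/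
def cAB (A B : ℝ) (x : ℝ) : ℝ := if x ≤ 0 then A else B

/-- An `AB`-entropy solution of `u_t + f(x,u)_x = 0` on `ℝ × [0,∞)` with
initial datum `u0`, for the flux `f(x,·) = fl` on `x<0` and `fr` on `x>0`,
relative to the connection `(A,B)`.  The structure bundles the solution `u`
(as a function of `(x,t)`), its one-sided spatial limits `um x t = u(x-,t)` and
`up x t = u(x+,t)` (for `t > 0`), the weak (distributional) formulation, the
Kružkov entropy inequalities away from the interface, the `AB`-interface
entropy inequality, `L¹_loc`-continuity in time and the initial condition. -/
structure ABSol (fl fr : ℝ → ℝ) (A B : ℝ) (u0 : ℝ → ℝ) where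
  u : ℝ → ℝ → ℝ
  meas : Measurable (Function.uncurry u)
  bdd : ∃ M : ℝ, ∀ x t, |u x t| ≤ M
  um : ℝ → ℝ → ℝ
  up : ℝ → ℝ → ℝ
  um_spec : ∀ x t, 0 < t →
    Tendsto (fun y => u y t) (nhdsWithin x (Iio x)) (nhds (um x t))
  up_spec : ∀ x t, 0 < t →
    Tendsto (fun y => u y t) (nhdsWithin x (Ioi x)) (nhds (up x t))
  weak : ∀ φ : ℝ → ℝ → ℝ,
    ContDiff ℝ 1 (fun p : ℝ × ℝ => φ p.1 p.2) →
    HasCompactSupport (fun p : ℝ × ℝ => φ p.1 p.2) →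
    (∀ x t, t ≤ 0 → φ x t = 0) →
    (∫ p : ℝ × ℝ, (u p.1 p.2 * deriv (fun s => φ p.1 s) p.2 +
        dflux fl fr p.1 (u p.1 p.2) * deriv (fun y => φ y p.2) p.1)) = 0
  kruzkov_l : ∀ (k : ℝ) (φ : ℝ → ℝ → ℝ),
    ContDiff ℝ 1 (fun p : ℝ × ℝ => φ p.1 p.2) →
    HasCompactSupport (fun p : ℝ × ℝ => φ p.1 p.2) →
    (∀ x t, 0 ≤ φ x t) →
    (∀ x t, 0 ≤ x ∨ t ≤ 0 → φ x t = 0) →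
    0 ≤ ∫ p : ℝ × ℝ, (|u p.1 p.2 - k| * deriv (fun s => φ p.1 s) p.2 +
        Real.sign (u p.1 p.2 - k) * (fl (u p.1 p.2) - fl k) *
          deriv (fun y => φ y p.2) p.1)
  kruzkov_r : ∀ (k : ℝ) (φ : ℝ → ℝ → ℝ),
    ContDiff ℝ 1 (fun p : ℝ × ℝ => φ p.1 p.2) →
    HasCompactSupport (fun p : ℝ × ℝ => φ p.1 p.2) →
    (∀ x t, 0 ≤ φ x t) →
    (∀ x t, x ≤ 0 ∨ t ≤ 0 → φ x t = 0) →
    0 ≤ ∫ p : ℝ × ℝ, (|u p.1 p.2 - k| * deriv (fun s => φ p.1 s) p.2 +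
        Real.sign (u p.1 p.2 - k) * (fr (u p.1 p.2) - fr k) *
          deriv (fun y => φ y p.2) p.1)
  interfaceEntropy : ∀ φ : ℝ → ℝ → ℝ,
    ContDiff ℝ 1 (fun p : ℝ × ℝ => φ p.1 p.2) →
    HasCompactSupport (fun p : ℝ × ℝ => φ p.1 p.2) →
    (∀ x t, 0 ≤ φ x t) →
    (∀ x t, t ≤ 0 → φ x t = 0) →
    0 ≤ ∫ p : ℝ × ℝ, (|u p.1 p.2 - cAB A B p.1| * deriv (fun s => φ p.1 s) p.2 +
        Real.sign (u p.1 p.2 - cAB A B p.1) *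
          (dflux fl fr p.1 (u p.1 p.2) - dflux fl fr p.1 (cAB A B p.1)) *
          deriv (fun y => φ y p.2) p.1)
  timeCont : ∀ (r t₀ : ℝ), 0 ≤ t₀ →
    Tendsto (fun t => ∫ x in Icc (-r) r, |u x t - u x t₀|)
      (nhdsWithin t₀ (Ici 0)) (nhds 0)
  init : ∀ᵐ x : ℝ ∂volume, u x 0 = u0 x

/-- `AB`-genuine/interface characteristic for the `AB`-entropy solution `sol`,
on the time interval `[0,T]`, where `γ = f_l(A) = f_r(B)`. -/
def IsABgic (T : ℝ) (fl fr : ℝ → ℝ) (γ : ℝ) {A B : ℝ} {u0 : ℝ → ℝ}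
    (sol : ABSol fl fr A B u0) (ζ : ℝ → ℝ) : Prop :=
  (∃ K : NNReal, LipschitzOnWith K ζ (Icc 0 T)) ∧
  (∀ᵐ t ∂(volume.restrict (Icc 0 T)),
    (ζ t < 0 → HasDerivAt ζ (deriv fl (sol.um (ζ t) t)) t ∧
      deriv fl (sol.um (ζ t) t) = deriv fl (sol.up (ζ t) t)) ∧
    (0 < ζ t → HasDerivAt ζ (deriv fr (sol.um (ζ t) t)) t ∧
      deriv fr (sol.um (ζ t) t) = deriv fr (sol.up (ζ t) t)) ∧
    (ζ t = 0 → fl (sol.um 0 t) = γ ∧ fr (sol.up 0 t) = γ))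

/-- `C(u,x)`: the set of `AB`-genuine/interface characteristics of `sol`
reaching `x` at time `T`. -/
def charSet (T : ℝ) (fl fr : ℝ → ℝ) (γ : ℝ) {A B : ℝ} {u0 : ℝ → ℝ}
    (sol : ABSol fl fr A B u0) (x : ℝ) : Set (ℝ → ℝ) :=
  {ζ | IsABgic T fl fr γ sol ζ ∧ ζ T = x}

/-- `C₀(u,x)`: the set of initial positions `ζ(0)` of characteristics in `C(u,x)`. -/
def charSet0 (T : ℝ) (fl fr : ℝ → ℝ) (γ : ℝ) {A B : ℝ} {u0 : ℝ → ℝ}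
    (sol : ABSol fl fr A B u0) (x : ℝ) : Set ℝ :=
  (fun ζ : ℝ → ℝ => ζ 0) '' charSet T fl fr γ sol x

/-- Membership in `L^∞(ℝ)`: measurable and (essentially) bounded. -/
def IsLinf (g : ℝ → ℝ) : Prop :=
  Measurable g ∧ ∃ M : ℝ, ∀ᵐ x : ℝ ∂volume, |g x| ≤ M

/-- `ω ∈ A^{[AB]}(T)`: the profile `ω` is attainable at time `T`. -/
def Attainable (T : ℝ) (fl fr : ℝ → ℝ) (A B : ℝ) (ω : ℝ → ℝ) : Prop :=
  ∃ u0 : ℝ → ℝ, IsLinf u0 ∧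
    ∃ sol : ABSol fl fr A B u0, ∀ᵐ x : ℝ ∂volume, sol.u x T = ω x

/-- `I_T^{[AB]}(ω)`: the set of (bounded) initial data whose `AB`-entropy
solution coincides a.e. with `ω` at time `T`. -/
def InitialSet (T : ℝ) (fl fr : ℝ → ℝ) (A B : ℝ) (ω : ℝ → ℝ) : Set (ℝ → ℝ) :=
  {u0 | IsLinf u0 ∧
    ∃ sol : ABSol fl fr A B u0, ∀ᵐ x : ℝ ∂volume, sol.u x T = ω x}

/-- `x` is a point of continuity of `ω`: the one-sided limits exist and coincide. -/
def ContinuityPt (ω : ℝ → ℝ) (x : ℝ) : Prop :=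
  ∃ l : ℝ, Tendsto ω (nhdsWithin x (Iio x)) (nhds l) ∧
    Tendsto ω (nhdsWithin x (Ioi x)) (nhds l)


open scoped Topology

abbrev SS : ℝ → ℝ := Real.smoothTransition

lemma SS_cd : ContDiff ℝ 1 SS := Real.smoothTransition.contDiff (n := 1)

lemma SS_dcont : Continuous (deriv SS) := SS_cd.continuous_deriv le_rfl

lemma SS_dzero (y : ℝ) (hy : y ∉ Ioo (0:ℝ) 1) : deriv SS y = 0 := by
  by_cases h0 : y ≤ 0
  · apply IsLocalMin.deriv_eq_zero
    refine Eventually.of_forall fun z => ?_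
    rw [show SS y = 0 from Real.smoothTransition.zero_of_nonpos h0]
    exact Real.smoothTransition.nonneg z
  · have h1 : 1 ≤ y := by
      by_contra h; exact hy ⟨not_le.1 h0, not_le.1 h⟩
    apply IsLocalMax.deriv_eq_zero
    refine Eventually.of_forall fun z => ?_
    rw [show SS y = 1 from Real.smoothTransition.one_of_one_le h1]
    exact Real.smoothTransition.le_one z

lemma SS_dcs : HasCompactSupport (deriv SS) :=
  HasCompactSupport.intro (isCompact_Icc (a := (0:ℝ)) (b := 1)) fun y hy =>
    SS_dzero y fun h => hy (Ioo_subset_Icc_self h)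

lemma SS_dint : Integrable (deriv SS) := SS_dcont.integrable_of_hasCompactSupport SS_dcs

lemma SS_integral : ∫ y, deriv SS y = 1 := by
  have h1 : ∫ y, deriv SS y = ∫ y in Ioc (0:ℝ) 1, deriv SS y := by
    refine (setIntegral_eq_integral_of_forall_compl_eq_zero fun y hy => ?_).symm
    exact SS_dzero y fun h => hy (Ioo_subset_Ioc_self h)
  rw [h1, ← intervalIntegral.integral_of_le zero_le_one,
    intervalIntegral.integral_deriv_eq_sub
      (fun x _ => (SS_cd.differentiable one_ne_zero) x) (SS_dcont.intervalIntegrable _ _)]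
  simp [SS]

lemma SS_lim (H : ℕ → ℝ → ℝ) (M l : ℝ) (hm : ∀ n, Measurable (H n))
    (hb : ∀ n y, |H n y| ≤ M)
    (hl : ∀ y ∈ Ioo (0:ℝ) 1, Tendsto (fun n => H n y) atTop (𝓝 l)) :
    Tendsto (fun n => ∫ y, deriv SS y * H n y) atTop (𝓝 l) := by
  have h : Tendsto (fun n => ∫ y, deriv SS y * H n y) atTop (𝓝 (∫ y, deriv SS y * l)) := by
    refine tendsto_integral_of_dominated_convergence (fun y => |deriv SS y| * M) ?_ ?_ ?_ ?_
    · intro n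
      exact (SS_dcont.measurable.mul (hm n)).aestronglyMeasurable
    · exact SS_dint.abs.mul_const M
    · intro n
      refine Eventually.of_forall fun y => ?_
      rw [Real.norm_eq_abs, abs_mul]
      exact mul_le_mul_of_nonneg_left (hb n y) (abs_nonneg _)
    · refine Eventually.of_forall fun y => ?_
      by_cases hy : y ∈ Ioo (0:ℝ) 1
      · exact (hl y hy).const_mul _
      · simp [SS_dzero y hy]
  rwa [integral_mul_const, SS_integral, one_mul] at h

/-- smooth step from `c` to `c + e`. -/
def stp (c e x : ℝ) : ℝ := SS ((x - c) / e)

lemma stp_hasDeriv (c e x : ℝ) : HasDerivAt (stp c e) (deriv SS ((x - c) / e) / e) x := by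
  have h := ((SS_cd.differentiable one_ne_zero) ((x - c) / e)).hasDerivAt
  have h2 : HasDerivAt (fun x : ℝ => (x - c) / e) (1 / e) x :=
    ((hasDerivAt_id x).sub_const c).div_const e
  have := h.comp x h2
  rw [mul_one_div] at this
  exact this

lemma stp_cd (c e : ℝ) : ContDiff ℝ 1 (stp c e) := by
  unfold stp
  exact SS_cd.comp ((contDiff_id.sub contDiff_const).div_const e)

lemma stp_scale (c e : ℝ) (he : 0 < e) (h : ℝ → ℝ) :
    ∫ x, deriv (stp c e) x * h x = ∫ y, deriv SS y * h (c + e * y) := by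
  have h1 : ∀ x, deriv (stp c e) x * h x =
      (fun z => deriv SS (z / e) / e * h (c + z)) (x - c) := by
    intro x
    simp [(stp_hasDeriv c e x).deriv]
  simp_rw [h1]
  rw [integral_sub_right_eq_self (fun z => deriv SS (z / e) / e * h (c + z)) c]
  have h2 := Measure.integral_comp_mul_left (fun z => deriv SS (z / e) / e * h (c + z)) e
  simp only [smul_eq_mul] at h2
  have h3 : ∀ x, deriv SS (e * x / e) / e * h (c + e * x)
      = e⁻¹ * (deriv SS x * h (c + e * x)) := by
    intro x
    rw [mul_div_cancel_left₀ _ he.ne']; ring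
  simp_rw [h3] at h2
  rw [integral_const_mul, abs_of_pos (inv_pos.2 he)] at h2
  exact (mul_left_cancel₀ (inv_pos.2 he).ne' h2).symm

lemma stp_nonneg (c e x : ℝ) : 0 ≤ stp c e x := Real.smoothTransition.nonneg _
lemma stp_le_one (c e x : ℝ) : stp c e x ≤ 1 := Real.smoothTransition.le_one _
lemma stp_zero (c e x : ℝ) (he : 0 < e) (h : x ≤ c) : stp c e x = 0 :=
  Real.smoothTransition.zero_of_nonpos (div_nonpos_of_nonpos_of_nonneg (by linarith) he.le)
lemma stp_one (c e x : ℝ) (he : 0 < e) (h : c + e ≤ x) : stp c e x = 1 :=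
  Real.smoothTransition.one_of_one_le ((one_le_div he).2 (by linarith))
lemma stp_anti (c c' e x : ℝ) (he : 0 < e) (h : c ≤ c') : stp c' e x ≤ stp c e x :=
  Real.smoothTransition.monotone (by gcongr)

/-- plateau -/
def plt (c d e x : ℝ) : ℝ := stp c e x - stp d e x

lemma plt_cd (c d e : ℝ) : ContDiff ℝ 1 (plt c d e) := (stp_cd c e).sub (stp_cd d e)
lemma plt_nonneg (c d e x : ℝ) (he : 0 < e) (h : c ≤ d) : 0 ≤ plt c d e x :=
  sub_nonneg.2 (stp_anti c d e x he h)
lemma plt_le_one (c d e x : ℝ) : plt c d e x ≤ 1 := by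
  have := stp_le_one c e x; have := stp_nonneg d e x; unfold plt; linarith
lemma plt_zero_left (c d e x : ℝ) (he : 0 < e) (h : c ≤ d) (hx : x ≤ c) : plt c d e x = 0 := by
  simp [plt, stp_zero c e x he hx, stp_zero d e x he (hx.trans h)]
lemma plt_zero_right (c d e x : ℝ) (he : 0 < e) (h : c ≤ d) (hx : d + e ≤ x) :
    plt c d e x = 0 := by
  simp [plt, stp_one c e x he (by linarith), stp_one d e x he hx]
lemma plt_one (c d e x : ℝ) (he : 0 < e) (hx : c + e ≤ x) (hx' : x ≤ d) :
    plt c d e x = 1 := by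
  simp [plt, stp_one c e x he hx, stp_zero d e x he hx']
lemma plt_cs (c d e : ℝ) (he : 0 < e) (h : c ≤ d) : HasCompactSupport (plt c d e) :=
  HasCompactSupport.intro (isCompact_Icc (a := c) (b := d + e)) fun x hx => by
    by_cases h1 : x ≤ c
    · exact plt_zero_left c d e x he h h1
    · exact plt_zero_right c d e x he h (by
        by_contra h2; exact hx ⟨(not_le.1 h1).le, (not_le.1 h2).le⟩)
lemma plt_deriv (c d e x : ℝ) :
    deriv (plt c d e) x = deriv (stp c e) x - deriv (stp d e) x :=
  ((stp_hasDeriv c e x).sub (stp_hasDeriv d e x)).deriv.trans (by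
    rw [(stp_hasDeriv c e x).deriv, (stp_hasDeriv d e x).deriv])
lemma plt_dcont (c d e : ℝ) : Continuous (deriv (plt c d e)) :=
  (plt_cd c d e).continuous_deriv le_rfl
lemma plt_int (c d e : ℝ) (he : 0 < e) (h : c ≤ d) : Integrable (plt c d e) :=
  (plt_cd c d e).continuous.integrable_of_hasCompactSupport (plt_cs c d e he h)
lemma plt_dint (c d e : ℝ) (he : 0 < e) (h : c ≤ d) : Integrable (deriv (plt c d e)) :=
  (plt_dcont c d e).integrable_of_hasCompactSupport (plt_cs c d e he h).deriv

lemma stp_dint (c e : ℝ) (he : 0 < e) (h : ℝ → ℝ) (M : ℝ) (hm : Measurable h)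
    (hb : ∀ x, |h x| ≤ M) : Integrable fun x => deriv (stp c e) x * h x := by
  have hcs : HasCompactSupport (deriv (stp c e)) :=
    HasCompactSupport.intro (isCompact_Icc (a := c) (b := c + e)) fun x hx => by
      rw [(stp_hasDeriv c e x).deriv, SS_dzero, zero_div]
      intro h
      apply hx
      have h1 := h.1; have h2 := h.2
      rw [div_lt_one he] at h2
      have h1' : 0 < x - c := by
        by_contra h'
        exact absurd h1 (not_lt.2 (div_nonpos_of_nonpos_of_nonneg (not_lt.1 h') he.le))
      constructor <;> linarith
  have h1 : Integrable (deriv (stp c e)) :=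
    ((stp_cd c e).continuous_deriv le_rfl).integrable_of_hasCompactSupport hcs
  exact h1.mul_bdd hm.aestronglyMeasurable (Eventually.of_forall hb)

lemma plt_scale (c d e : ℝ) (he : 0 < e) (h : ℝ → ℝ) (M : ℝ) (hm : Measurable h)
    (hb : ∀ x, |h x| ≤ M) :
    ∫ x, deriv (plt c d e) x * h x =
      (∫ y, deriv SS y * h (c + e * y)) - ∫ y, deriv SS y * h (d + e * y) := by
  simp_rw [plt_deriv, sub_mul]
  rw [integral_sub (stp_dint c e he h M hm hb) (stp_dint d e he h M hm hb),
    stp_scale c e he, stp_scale d e he]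

lemma weak_tensor (p q : ℝ → ℝ → ℝ) (M : ℝ) (hp : Measurable (Function.uncurry p))
    (hq : Measurable (Function.uncurry q)) (hpb : ∀ x t, |p x t| ≤ M) (hqb : ∀ x t, |q x t| ≤ M)
    (al be : ℝ → ℝ) (hal : Integrable al) (hal' : Integrable (deriv al))
    (hbe : Integrable be) (hbe' : Integrable (deriv be)) :
    (∫ z : ℝ × ℝ, (p z.1 z.2 * deriv (fun s => al z.1 * be s) z.2 +
        q z.1 z.2 * deriv (fun y => al y * be z.2) z.1)) =
    (∫ t, deriv be t * ∫ x, al x * p x t) + ∫ t, be t * ∫ x, deriv al x * q x t := by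
  have h1 : Integrable (fun z : ℝ × ℝ => (al z.1 * deriv be z.2) * p z.1 z.2) (volume.prod volume) :=
    (hal.mul_prod hbe').mul_bdd (c := M) hp.aestronglyMeasurable
      (Eventually.of_forall fun z => hpb z.1 z.2)
  have h2 : Integrable (fun z : ℝ × ℝ => (deriv al z.1 * be z.2) * q z.1 z.2) (volume.prod volume) :=
    (hal'.mul_prod hbe).mul_bdd (c := M) hq.aestronglyMeasurable
      (Eventually.of_forall fun z => hqb z.1 z.2)
  have e : ∀ z : ℝ × ℝ, (p z.1 z.2 * deriv (fun s => al z.1 * be s) z.2 +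
        q z.1 z.2 * deriv (fun y => al y * be z.2) z.1) =
      (al z.1 * deriv be z.2) * p z.1 z.2 + (deriv al z.1 * be z.2) * q z.1 z.2 := by
    intro z
    rw [deriv_const_mul_field, deriv_mul_const_field]; ring
  simp_rw [e]
  rw [Measure.volume_eq_prod, integral_add h1 h2, integral_prod_symm _ h1, integral_prod_symm _ h2]
  congr 1
  · refine integral_congr_ae (Eventually.of_forall fun t => ?_)
    simp only
    rw [← integral_const_mul]
    refine integral_congr_ae (Eventually.of_forall fun x => ?_)
    simp only; ring
  · refine integral_congr_ae (Eventually.of_forall fun t => ?_)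
    simp only
    rw [← integral_const_mul]
    refine integral_congr_ae (Eventually.of_forall fun x => ?_)
    simp only; ring

lemma eps_pos (n : ℕ) : (0:ℝ) < 1 / ((n:ℝ) + 1) := Nat.one_div_pos_of_nat
lemma eps_le (n : ℕ) : 1 / ((n:ℝ) + 1) ≤ 1 := by
  rw [div_le_one (by positivity)]; linarith [(Nat.cast_nonneg n : (0:ℝ) ≤ n)]
lemma eps_tendsto : Tendsto (fun n : ℕ => 1 / ((n:ℝ) + 1)) atTop (𝓝 0) :=
  tendsto_one_div_add_atTop_nhds_zero_nat

/-- limit of plateau functions integrated -/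
lemma plt_lim_x (a b : ℝ) (hab : a ≤ b) (x : ℝ) :
    Tendsto (fun n : ℕ => plt (a - 1 / ((n:ℝ) + 1)) b (1 / ((n:ℝ) + 1)) x) atTop
      (𝓝 ((Icc a b).indicator 1 x)) := by
  by_cases hx : x ∈ Icc a b
  · rw [indicator_of_mem hx]
    refine tendsto_const_nhds.congr fun n => ?_
    rw [plt_one _ _ _ _ (eps_pos n) (by linarith [hx.1]) hx.2]; rfl
  · rw [indicator_of_notMem hx]
    refine tendsto_const_nhds.congr' ?_
    by_cases h : x < a
    · have := (eps_tendsto.eventually (gt_mem_nhds (show (0:ℝ) < a - x by linarith)))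
      filter_upwards [this] with n hn
      rw [plt_zero_left _ _ _ _ (eps_pos n) (by linarith [eps_pos n]) (by linarith)]
    · have hb : b < x := by
        by_contra h'; exact hx ⟨not_lt.1 h, not_lt.1 h'⟩
      have := (eps_tendsto.eventually (gt_mem_nhds (show (0:ℝ) < x - b by linarith)))
      filter_upwards [this] with n hn
      rw [plt_zero_right _ _ _ _ (eps_pos n) (by linarith [eps_pos n]) (by linarith)]

lemma plt_lim_t (a b : ℝ) (hab : a ≤ b) (x : ℝ) :
    Tendsto (fun n : ℕ => plt a b (1 / ((n:ℝ) + 1)) x) atTop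
      (𝓝 ((Ioc a b).indicator 1 x)) := by
  by_cases hx : x ∈ Ioc a b
  · rw [indicator_of_mem hx]
    refine tendsto_const_nhds.congr' ?_
    have := (eps_tendsto.eventually (gt_mem_nhds (show (0:ℝ) < x - a by linarith [hx.1])))
    filter_upwards [this] with n hn
    rw [plt_one _ _ _ _ (eps_pos n) (by linarith) hx.2]; rfl
  · rw [indicator_of_notMem hx]
    refine tendsto_const_nhds.congr' ?_
    by_cases h : x ≤ a
    · refine Eventually.of_forall fun n => ?_
      simp only
      rw [plt_zero_left _ _ _ _ (eps_pos n) hab h]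
    · have hb : b < x := by
        by_contra h'; exact hx ⟨not_le.1 h, not_lt.1 h'⟩
      have := (eps_tendsto.eventually (gt_mem_nhds (show (0:ℝ) < x - b by linarith)))
      filter_upwards [this] with n hn
      rw [plt_zero_right _ _ _ _ (eps_pos n) hab (by linarith)]

lemma plt_abs_le (c d e : ℝ) (he : 0 < e) (h : c ≤ d) (hi : ℝ) (hdi : d + e ≤ hi) (lo : ℝ)
    (hlo : lo ≤ c) (x : ℝ) :
    |plt c d e x| ≤ (Icc lo hi).indicator 1 x := by
  rw [abs_of_nonneg (plt_nonneg c d e x he h)]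
  by_cases hx : x ∈ Icc lo hi
  · rw [indicator_of_mem hx]; exact plt_le_one _ _ _ _
  · rw [indicator_of_notMem hx]
    by_cases h1 : x < lo
    · rw [plt_zero_left _ _ _ _ he h (by linarith)]
    · rw [plt_zero_right _ _ _ _ he h (by
        by_contra h2; exact hx ⟨not_lt.1 h1, by linarith⟩)]

theorem weak_limit (p q : ℝ → ℝ → ℝ) (M : ℝ) (hp : Measurable (Function.uncurry p))
    (hq : Measurable (Function.uncurry q)) (hpb : ∀ x t, |p x t| ≤ M) (hqb : ∀ x t, |q x t| ≤ M)
    (hpc : ∀ (r t₀ : ℝ), 0 ≤ t₀ →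
      Tendsto (fun t => ∫ x in Icc (-r) r, |p x t - p x t₀|) (𝓝[Ici 0] t₀) (𝓝 0))
    (hw : ∀ φ : ℝ → ℝ → ℝ,
      ContDiff ℝ 1 (fun p : ℝ × ℝ => φ p.1 p.2) →
      HasCompactSupport (fun p : ℝ × ℝ => φ p.1 p.2) →
      (∀ x t, 0 ≤ φ x t) →
      (∀ x t, t ≤ 0 → φ x t = 0) →
      0 ≤ ∫ z : ℝ × ℝ, (p z.1 z.2 * deriv (fun s => φ z.1 s) z.2 +
        q z.1 z.2 * deriv (fun y => φ y z.2) z.1))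
    (a b : ℝ) (hab : a ≤ b) (qm qp : ℝ → ℝ)
    (hqm : ∀ t, 0 < t → Tendsto (fun x => q x t) (𝓝[<] a) (𝓝 (qm t)))
    (hqp : ∀ t, 0 < t → Tendsto (fun x => q x t) (𝓝[>] b) (𝓝 (qp t)))
    (s t : ℝ) (hs : 0 < s) (hst : s ≤ t) :
    0 ≤ (∫ x in a..b, p x s) - (∫ x in a..b, p x t) + ∫ τ in s..t, (qm τ - qp τ) := by
  set e : ℕ → ℝ := fun n => 1 / ((n:ℝ) + 1) with he
  have epos : ∀ n, 0 < e n := eps_pos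
  have ele : ∀ n, e n ≤ 1 := eps_le
  have elim : Tendsto e atTop (𝓝 0) := eps_tendsto
  have M0 : 0 ≤ M := (abs_nonneg _).trans (hpb 0 0)
  set al : ℕ → ℝ → ℝ := fun n => plt (a - e n) b (e n) with hal
  set be : ℕ → ℝ → ℝ := fun n => plt s t (e n) with hbe
  have hab' : ∀ n, a - e n ≤ b := fun n => by linarith [epos n]
  have key : ∀ n, 0 ≤ (∫ t, deriv (be n) t * ∫ x, al n x * p x t) +
      ∫ t, be n t * ∫ x, deriv (al n) x * q x t := by
    intro n
    rw [← weak_tensor p q M hp hq hpb hqb (al n) (be n) (plt_int _ _ _ (epos n) (hab' n))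
      (plt_dint _ _ _ (epos n) (hab' n)) (plt_int _ _ _ (epos n) hst)
      (plt_dint _ _ _ (epos n) hst)]
    refine hw (fun x t => al n x * be n t) ?_ ?_ ?_ ?_
    · exact ((plt_cd _ _ _).comp contDiff_fst).mul ((plt_cd _ _ _).comp contDiff_snd)
    · refine HasCompactSupport.intro ((plt_cs _ _ _ (epos n) (hab' n)).isCompact.prod
        (plt_cs _ _ _ (epos n) hst).isCompact) fun z hz => ?_
      rw [mem_prod, not_and_or] at hz
      rcases hz with hz | hz
      · simp only [hal]; rw [image_eq_zero_of_notMem_tsupport hz, zero_mul]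
      · simp only [hbe]; rw [image_eq_zero_of_notMem_tsupport hz, mul_zero]
    · intro x t
      exact mul_nonneg (plt_nonneg _ _ _ _ (epos n) (hab' n)) (plt_nonneg _ _ _ _ (epos n) hst)
    · intro x t ht
      simp only [hbe]; rw [plt_zero_left _ _ _ _ (epos n) hst (by linarith), mul_zero]
  -- the functions M_n
  set m : ℕ → ℝ → ℝ := fun n t => ∫ x, al n x * p x t with hm
  set I : ℕ → ℝ → ℝ := fun n t => ∫ x, deriv (al n) x * q x t with hI
  have hpx : ∀ t, Measurable fun x => p x t := fun t => hp.comp (measurable_id.prodMk measurable_const)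
  have hqx : ∀ t, Measurable fun x => q x t := fun t => hq.comp (measurable_id.prodMk measurable_const)
  have halc : ∀ n, Measurable (al n) := fun n => (plt_cd _ _ _).continuous.measurable
  have hmm : ∀ n, Measurable (m n) := by
    intro n
    have : StronglyMeasurable (fun z : ℝ × ℝ => al n z.2 * p z.2 z.1) :=
      (((halc n).comp measurable_snd).mul (hp.comp measurable_swap)).stronglyMeasurable
    exact this.integral_prod_right.measurable
  have hIm : ∀ n, Measurable (I n) := by
    intro n
    have : StronglyMeasurable (fun z : ℝ × ℝ => deriv (al n) z.2 * q z.2 z.1) :=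
      (((plt_dcont _ _ _).measurable.comp measurable_snd).mul
        (hq.comp measurable_swap)).stronglyMeasurable
    exact this.integral_prod_right.measurable
  have halb : ∀ n x, |al n x| ≤ (Icc (a-1) (b+1)).indicator 1 x := fun n x =>
    plt_abs_le _ _ _ (epos n) (hab' n) _ (by linarith [ele n]) _ (by linarith [ele n]) x
  have hindi : ∀ c d : ℝ, Integrable ((Icc c d).indicator (1 : ℝ → ℝ)) := fun c d =>
    (integrable_indicator_iff measurableSet_Icc).2 (by
      show IntegrableOn (fun _ => (1:ℝ)) _ _
      simp)
  have hali : ∀ n t, Integrable fun x => al n x * p x t := fun n t =>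
    (plt_int _ _ _ (epos n) (hab' n)).mul_bdd (hpx t).aestronglyMeasurable
      (Eventually.of_forall fun x => hpb x t)
  have hind0 : ∀ c d x : ℝ, 0 ≤ (Icc c d).indicator (1 : ℝ → ℝ) x := fun c d x =>
    indicator_nonneg (fun _ _ => zero_le_one) x
  have hmb : ∀ n t, |m n t| ≤ ∫ x, (Icc (a-1) (b+1)).indicator (1:ℝ → ℝ) x * M := by
    intro n t
    rw [← Real.norm_eq_abs]
    refine norm_integral_le_of_norm_le ((hindi _ _).mul_const M) (Eventually.of_forall fun x => ?_)
    rw [Real.norm_eq_abs, abs_mul]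
    exact mul_le_mul (halb n x) (hpb x t) (abs_nonneg _) (hind0 _ _ _)
  -- limit of m at fixed time
  have hmlim : ∀ t, Tendsto (fun n => m n t) atTop (𝓝 (∫ x in a..b, p x t)) := by
    intro t
    have : (∫ x in a..b, p x t) = ∫ x, (Icc a b).indicator 1 x * p x t := by
      rw [intervalIntegral.integral_of_le hab, ← integral_Icc_eq_integral_Ioc,
        ← integral_indicator measurableSet_Icc]
      refine integral_congr_ae (Eventually.of_forall fun x => ?_)
      by_cases hx : x ∈ Icc a b <;> simp [hx]
    rw [this]
    refine tendsto_integral_of_dominated_convergence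
      (fun x => (Icc (a-1) (b+1)).indicator (1:ℝ → ℝ) x * M) ?_ ((hindi _ _).mul_const M) ?_ ?_
    · exact fun n => (hali n t).aestronglyMeasurable
    · intro n
      refine Eventually.of_forall fun x => ?_
      rw [Real.norm_eq_abs, abs_mul]
      exact mul_le_mul (halb n x) (hpb x t) (abs_nonneg _) (hind0 _ _ _)
    · exact Eventually.of_forall fun x => (plt_lim_x a b hab x).mul_const _
  -- limit at moving time
  have hmlim2 : ∀ t, 0 < t → ∀ y ∈ Ioo (0:ℝ) 1,
      Tendsto (fun n => m n (t + e n * y)) atTop (𝓝 (∫ x in a..b, p x t)) := by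
    intro t ht y hy
    set r : ℝ := max (1 - a) (b + 1)
    have hr1 : -r ≤ a - 1 := by have := le_max_left (1-a) (b+1); linarith
    have hr2 : b + 1 ≤ r := le_max_right _ _
    have htl : Tendsto (fun n => t + e n * y) atTop (𝓝[Ici 0] t) := by
      refine tendsto_nhdsWithin_iff.2 ⟨?_, ?_⟩
      · simpa using (elim.mul_const y).const_add t
      · exact Eventually.of_forall fun n => by
          have := mul_pos (epos n) hy.1
          simp only [mem_Ici]; linarith
    have h1 := (hpc r t ht.le).comp htl
    have h2 : Tendsto (fun n => m n (t + e n * y) - m n t) atTop (𝓝 0) := by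
      refine squeeze_zero_norm (fun n => ?_) h1
      simp only [hm, Function.comp]
      rw [← integral_sub (hali n _) (hali n _), ← integral_indicator measurableSet_Icc]
      have hbd : Integrable ((Icc (-r) r).indicator fun x => |p x (t + e n * y) - p x t|) := by
        refine Integrable.mono' ((hindi (-r) r).mul_const (2*M)) ?_ ?_
        · exact (((hpx _).sub (hpx _)).abs.indicator measurableSet_Icc).aestronglyMeasurable
        · refine Eventually.of_forall fun x => ?_
          by_cases hx : x ∈ Icc (-r) r
          · simp only [hx, indicator_of_mem, Real.norm_eq_abs, abs_abs, Pi.one_apply, one_mul]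
            have := abs_sub (p x (t + e n * y)) (p x t)
            have := hpb x (t + e n * y); have := hpb x t; linarith
          · simp [hx]
      refine norm_integral_le_of_norm_le hbd (Eventually.of_forall fun x => ?_)
      rw [← mul_sub, Real.norm_eq_abs, abs_mul]
      by_cases hx : x ∈ Icc (-r) r
      · rw [indicator_of_mem hx]
        have : |al n x| ≤ 1 := (halb n x).trans (indicator_le_self' (fun _ _ => zero_le_one) x)
        exact mul_le_of_le_one_left (abs_nonneg _) this
      · rw [indicator_of_notMem hx]
        have : |al n x| ≤ 0 := by
          refine (halb n x).trans (le_of_eq (indicator_of_notMem (fun h => hx ?_) _))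
          exact ⟨hr1.trans h.1, h.2.trans hr2⟩
        rw [le_antisymm this (abs_nonneg _), zero_mul]
    simpa using h2.add (hmlim t)
  have T1 : Tendsto (fun n => ∫ t, deriv (be n) t * m n t) atTop
      (𝓝 ((∫ x in a..b, p x s) - ∫ x in a..b, p x t)) := by
    have hsc : ∀ n, (∫ t, deriv (be n) t * m n t) =
        (∫ y, deriv SS y * m n (s + e n * y)) - ∫ y, deriv SS y * m n (t + e n * y) := fun n =>
      plt_scale s t (e n) (epos n) (m n) _ (hmm n) (hmb n)
    simp_rw [hsc]
    refine (SS_lim (fun n y => m n (s + e n * y)) _ _ (fun n => ?_) (fun n y => hmb n _)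
      (hmlim2 s hs)).sub
      (SS_lim (fun n y => m n (t + e n * y)) _ _ (fun n => ?_) (fun n y => hmb n _)
      (hmlim2 t (hs.trans_le hst)))
    · exact (hmm n).comp (by fun_prop)
    · exact (hmm n).comp (by fun_prop)
  have hIeq : ∀ n τ, I n τ = (∫ y, deriv SS y * q (a - e n + e n * y) τ) -
      ∫ y, deriv SS y * q (b + e n * y) τ := fun n τ =>
    plt_scale (a - e n) b (e n) (epos n) (fun x => q x τ) M (hqx τ) (fun x => hqb x τ)
  have hIlim : ∀ τ, 0 < τ → Tendsto (fun n => I n τ) atTop (𝓝 (qm τ - qp τ)) := by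
    intro τ hτ
    simp_rw [hIeq]
    refine (SS_lim (fun n y => q (a - e n + e n * y) τ) M _ (fun n => ?_) (fun n y => hqb _ _)
      fun y hy => ?_).sub
      (SS_lim (fun n y => q (b + e n * y) τ) M _ (fun n => ?_) (fun n y => hqb _ _)
      fun y hy => ?_)
    · exact (hqx τ).comp (by fun_prop)
    · refine (hqm τ hτ).comp (tendsto_nhdsWithin_iff.2 ⟨?_, Eventually.of_forall fun n => ?_⟩)
      · have := (elim.const_sub a).add (elim.mul_const y)
        simpa using this
      · have := mul_pos (epos n) (sub_pos.2 hy.2)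
        simp only [mem_Iio]; linarith
    · exact (hqx τ).comp (by fun_prop)
    · refine (hqp τ hτ).comp (tendsto_nhdsWithin_iff.2 ⟨?_, Eventually.of_forall fun n => ?_⟩)
      · have := (elim.mul_const y).const_add b
        simpa using this
      · have := mul_pos (epos n) hy.1
        simp only [mem_Ioi]; linarith
  set C : ℝ := ∫ y, |deriv SS y| * M with hC
  have hIb : ∀ n τ, |I n τ| ≤ C + C := by
    intro n τ
    rw [hIeq]
    have hgen : ∀ g : ℝ → ℝ, |∫ y, deriv SS y * q (g y) τ| ≤ C := by
      intro g
      rw [← Real.norm_eq_abs]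
      refine norm_integral_le_of_norm_le (SS_dint.abs.mul_const M) (Eventually.of_forall fun y => ?_)
      rw [Real.norm_eq_abs, abs_mul]
      exact mul_le_mul_of_nonneg_left (hqb _ _) (abs_nonneg _)
    exact (abs_sub _ _).trans (add_le_add (hgen _) (hgen _))
  have C0 : 0 ≤ C + C := (abs_nonneg _).trans (hIb 0 0)
  have T2 : Tendsto (fun n => ∫ t, be n t * I n t) atTop (𝓝 (∫ τ in s..t, (qm τ - qp τ))) := by
    have : (∫ τ in s..t, (qm τ - qp τ)) = ∫ τ, (Ioc s t).indicator 1 τ * (qm τ - qp τ) := by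
      rw [intervalIntegral.integral_of_le hst, ← integral_indicator measurableSet_Ioc]
      refine integral_congr_ae (Eventually.of_forall fun x => ?_)
      by_cases hx : x ∈ Ioc s t <;> simp [hx]
    rw [this]
    have hbb : ∀ n x, |be n x| ≤ (Icc s (t+1)).indicator 1 x := fun n x =>
      plt_abs_le _ _ _ (epos n) hst _ (by linarith [ele n]) _ le_rfl x
    refine tendsto_integral_of_dominated_convergence
      (fun x => (Icc s (t+1)).indicator (1:ℝ → ℝ) x * (C + C)) ?_ ((hindi _ _).mul_const _) ?_ ?_
    · intro n
      exact ((plt_cd _ _ _).continuous.measurable.mul (hIm n)).aestronglyMeasurable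
    · intro n
      refine Eventually.of_forall fun x => ?_
      rw [Real.norm_eq_abs, abs_mul]
      exact mul_le_mul (hbb n x) (hIb n x) (abs_nonneg _) (hind0 _ _ _)
    · refine Eventually.of_forall fun τ => ?_
      by_cases hτ : 0 < τ
      · exact (plt_lim_t s t hst τ).mul (hIlim τ hτ)
      · have h1 : (Ioc s t).indicator (1:ℝ → ℝ) τ = 0 :=
          indicator_of_notMem (fun h => hτ (hs.trans h.1)) _
        rw [h1, zero_mul]
        refine tendsto_const_nhds.congr fun n => ?_
        simp only [hbe]
        rw [plt_zero_left _ _ _ _ (epos n) hst (by linarith), zero_mul]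
  exact ge_of_tendsto' (T1.add T2) key

lemma bdd_ii {h : ℝ → ℝ} {M : ℝ} (hm : Measurable h) (hb : ∀ x, |h x| ≤ M) (a b : ℝ) :
    IntervalIntegrable h volume a b := by
  refine (intervalIntegrable_const (c := M)).mono_fun hm.aestronglyMeasurable
    (Eventually.of_forall fun x => ?_)
  exact (hb x).trans (le_abs_self M)

lemma avg_eq (h : ℝ → ℝ) (d x : ℝ) (hd : d ≠ 0) :
    ∫ θ in (0:ℝ)..1, h (x + d * θ) = d⁻¹ * ∫ z in x..x + d, h z := by
  have := intervalIntegral.integral_comp_add_mul (a := 0) (b := 1) h hd x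
  simpa using this

lemma avg_lip {h : ℝ → ℝ} {M : ℝ} (hm : Measurable h) (hb : ∀ x, |h x| ≤ M)
    (d : ℝ) (hd : d ≠ 0) (x y : ℝ) :
    |(∫ θ in (0:ℝ)..1, h (x + d * θ)) - ∫ θ in (0:ℝ)..1, h (y + d * θ)| ≤
      |d⁻¹| * (2 * M) * |x - y| := by
  rw [avg_eq h d x hd, avg_eq h d y hd, ← mul_sub, abs_mul, mul_assoc]
  refine mul_le_mul_of_nonneg_left ?_ (abs_nonneg _)
  rw [intervalIntegral.integral_interval_sub_interval_comm (bdd_ii hm hb _ _) (bdd_ii hm hb _ _)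
    (bdd_ii hm hb _ _)]
  have h1 : ‖∫ z in x..y, h z‖ ≤ M * |y - x| :=
    intervalIntegral.norm_integral_le_of_norm_le_const fun z _ => hb z
  have h2 : ‖∫ z in x + d..y + d, h z‖ ≤ M * |y + d - (x + d)| :=
    intervalIntegral.norm_integral_le_of_norm_le_const fun z _ => hb z
  rw [add_sub_add_right_eq_sub, abs_sub_comm y x] at h2
  rw [abs_sub_comm y x] at h1
  rw [Real.norm_eq_abs] at h1 h2
  refine (abs_sub _ _).trans ?_
  linarith

lemma hasDerivAt_zero_of_quad {f : ℝ → ℝ} {t C : ℝ}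
    (h : ∀ᶠ r in 𝓝 t, |f r - f t| ≤ C * |r - t| ^ 2) : HasDerivAt f 0 t := by
  rw [hasDerivAt_iff_isLittleO]
  have h1 : (fun r => f r - f t - (r - t) • (0:ℝ)) =O[𝓝 t] fun r => ‖r - t‖ ^ 2 := by
    refine Asymptotics.IsBigO.of_bound C ?_
    filter_upwards [h] with r hr
    simpa using hr
  exact h1.trans_isLittleO (Asymptotics.isLittleO_pow_sub_sub t one_lt_two)

section chain
variable {u F U : ℝ → ℝ → ℝ} {M : ℝ}

lemma chain_avg (hu : Measurable (Function.uncurry u)) (hF : Measurable (Function.uncurry F))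
    (hub : ∀ x t, |u x t| ≤ M) (hFb : ∀ x t, |F x t| ≤ M)
    (hUx : ∀ x y t, U y t - U x t = ∫ z in x..y, u z t)
    (hUt : ∀ x s t, 0 < s → 0 < t → U x t - U x s = -∫ τ in s..t, F x τ)
    {ζ : ℝ → ℝ} {K : NNReal} (hζ : LipschitzWith K ζ) (d : ℝ) (hd : d ≠ 0)
    (s t : ℝ) (hs : 0 < s) (hst : s ≤ t) :
    (∫ θ in (0:ℝ)..1, U (ζ t + d * θ) t) - (∫ θ in (0:ℝ)..1, U (ζ s + d * θ) s) =
      ∫ τ in s..t, (deriv ζ τ * (∫ θ in (0:ℝ)..1, u (ζ τ + d * θ) τ)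
        - ∫ θ in (0:ℝ)..1, F (ζ τ + d * θ) τ) := by
  have hM0 : 0 ≤ M := (abs_nonneg _).trans (hub 0 0)
  have hux : ∀ t, Measurable fun x => u x t := fun t =>
    hu.comp (measurable_id.prodMk measurable_const)
  have hFx : ∀ t, Measurable fun x => F x t := fun t =>
    hF.comp (measurable_id.prodMk measurable_const)
  have UL : ∀ x y t, |U y t - U x t| ≤ M * |y - x| := by
    intro x y t
    rw [hUx, ← Real.norm_eq_abs]
    exact intervalIntegral.norm_integral_le_of_norm_le_const fun z _ => hub z t
  have UT : ∀ x s t, 0 < s → 0 < t → |U x t - U x s| ≤ M * |t - s| := by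
    intro x s t hs ht
    rw [hUt x s t hs ht, abs_neg, ← Real.norm_eq_abs]
    exact intervalIntegral.norm_integral_le_of_norm_le_const fun z _ => hFb x z
  have Uc : ∀ t, Continuous fun x => U x t := by
    intro t
    have : LipschitzWith ⟨M, hM0⟩ fun x => U x t :=
      LipschitzWith.of_dist_le_mul fun x y => by
        rw [Real.dist_eq, Real.dist_eq]; exact UL y x t
    exact this.continuous
  set P : ℝ → ℝ → ℝ := fun x t => ∫ θ in (0:ℝ)..1, U (x + d * θ) t with hP
  set G : ℝ → ℝ → ℝ := fun x t => ∫ θ in (0:ℝ)..1, u (x + d * θ) t with hG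
  set g : ℝ → ℝ → ℝ := fun x t => ∫ θ in (0:ℝ)..1, F (x + d * θ) t with hg
  have Pii : ∀ x t, IntervalIntegrable (fun θ => U (x + d * θ) t) volume 0 1 := fun x t =>
    ((Uc t).comp (by fun_prop : Continuous fun θ : ℝ => x + d * θ)).intervalIntegrable _ _
  have Geq : ∀ x t, G x t = d⁻¹ * (U (x + d) t - U x t) := by
    intro x t
    simp only [hG]
    rw [avg_eq (fun x => u x t) d x hd, hUx]
  have PL : ∀ x y t, |P y t - P x t| ≤ M * |y - x| := by
    intro x y t
    simp only [hP]
    rw [← intervalIntegral.integral_sub (Pii y t) (Pii x t), ← Real.norm_eq_abs]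
    have := intervalIntegral.norm_integral_le_of_norm_le_const (a := 0) (b := 1)
      (C := M * |y - x|) (f := fun θ => U (y + d * θ) t - U (x + d * θ) t) fun θ _ => by
        have := UL (x + d * θ) (y + d * θ) t
        rwa [add_sub_add_right_eq_sub] at this
    simpa using this
  have PT : ∀ x s t, 0 < s → 0 < t → |P x t - P x s| ≤ M * |t - s| := by
    intro x s t hs ht
    simp only [hP]
    rw [← intervalIntegral.integral_sub (Pii x t) (Pii x s), ← Real.norm_eq_abs]
    have := intervalIntegral.norm_integral_le_of_norm_le_const (a := 0) (b := 1)
      (C := M * |t - s|) (f := fun θ => U (x + d * θ) t - U (x + d * θ) s) fun θ _ =>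
        UT (x + d * θ) s t hs ht
    simpa using this
  -- x-derivative of P
  have PD : ∀ x t, HasDerivAt (fun x => P x t) (G x t) x := by
    intro x t
    have hV : ∀ y, HasDerivAt (fun y => ∫ z in (0:ℝ)..y, U z t) (U y t) y := fun y =>
      intervalIntegral.integral_hasDerivAt_right ((Uc t).intervalIntegrable _ _)
        ((Uc t).stronglyMeasurableAtFilter _ _) (Uc t).continuousAt
    have h1 := (((hV (x + d)).comp_add_const x d).sub (hV x)).const_mul d⁻¹
    rw [Geq]
    refine h1.congr_of_eventuallyEq (Eventually.of_forall fun y => ?_)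
    simp only [hP]
    rw [avg_eq (fun x => U x t) d y hd]
    simp only [Pi.sub_apply]
    rw [intervalIntegral.integral_interval_sub_left ((Uc t).intervalIntegrable _ _)
      ((Uc t).intervalIntegrable _ _)]
  set C : ℝ := |d⁻¹| * (2 * M) with hC
  have hC0 : 0 ≤ C := by positivity
  have GLip : ∀ x y t, |G x t - G y t| ≤ C * |x - y| := fun x y t =>
    avg_lip (hux t) (fun x => hub x t) d hd x y
  have gL : ∀ x y t, |g x t - g y t| ≤ C * |x - y| := fun x y t =>
    avg_lip (hFx t) (fun x => hFb x t) d hd x y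
  have GT : ∀ x s t, 0 < s → 0 < t → |G x t - G x s| ≤ C * |t - s| := by
    intro x s t hs ht
    rw [Geq, Geq, ← mul_sub, abs_mul, hC, mul_assoc]
    refine mul_le_mul_of_nonneg_left ?_ (abs_nonneg _)
    have e : U (x + d) t - U x t - (U (x + d) s - U x s) =
      (U (x + d) t - U (x + d) s) - (U x t - U x s) := by ring
    rw [e]
    refine (abs_sub _ _).trans ?_
    have := UT (x + d) s t hs ht; have := UT x s t hs ht; linarith
  have Pest : ∀ x y s t, 0 < s → 0 < t →
      |P y t - P x t - (y - x) * G x s| ≤ C * (|y - x| + |t - s|) * |y - x| := by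
    intro x y s t hs ht
    have h := Convex.norm_image_sub_le_of_norm_hasDerivWithin_le (𝕜 := ℝ)
      (f := fun z => P z t - z * G x s) (f' := fun z => G z t - G x s) (s := uIcc x y)
      (x := x) (y := y) (C := C * (|y - x| + |t - s|)) ?_ ?_ (convex_uIcc x y) left_mem_uIcc
      right_mem_uIcc
    · have e : P y t - P x t - (y - x) * G x s = (P y t - y * G x s) - (P x t - x * G x s) := by
        ring
      rw [e]; exact h
    · intro z _
      have := ((PD z t).sub ((hasDerivAt_id z).mul_const (G x s))).hasDerivWithinAt (s := uIcc x y)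
      rw [one_mul] at this
      exact this
    · intro z hz
      have e : G z t - G x s = (G z t - G x t) + (G x t - G x s) := by ring
      rw [Real.norm_eq_abs, e]
      refine (abs_add_le _ _).trans ?_
      have h1 := GLip z x t
      have h2 := GT x s t hs ht
      have h3 : |z - x| ≤ |y - x| := abs_sub_left_of_mem_uIcc hz
      have h4 := mul_le_mul_of_nonneg_left h3 hC0
      linarith
  have Pg : ∀ x s t, 0 < s → 0 < t → P x t - P x s = -∫ τ in s..t, g x τ := by
    intro x s t hs ht
    simp only [hP, hg]
    rw [← intervalIntegral.integral_sub (Pii x t) (Pii x s)]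
    simp_rw [hUt _ s t hs ht]
    rw [intervalIntegral.integral_neg, intervalIntegral_intervalIntegral_swap]
    have hmeas : Measurable (Function.uncurry fun θ τ => F (x + d * θ) τ) :=
      hF.comp (by fun_prop : Measurable fun z : ℝ × ℝ => (x + d * z.1, z.2))
    have : IsFiniteMeasure (volume.restrict (uIoc (0:ℝ) 1)) := ⟨by simp [uIoc]⟩
    have : IsFiniteMeasure (volume.restrict (uIoc s t)) := ⟨by simp [uIoc]⟩
    rw [IntegrableOn, Measure.volume_eq_prod, ← Measure.prod_restrict]
    exact Integrable.of_bound hmeas.aestronglyMeasurable M (Eventually.of_forall fun z => hFb _ _)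
  have ζm : Measurable ζ := hζ.continuous.measurable
  have gm : Measurable fun τ => g (ζ τ) τ := by
    have : StronglyMeasurable (fun z : ℝ × ℝ => F (ζ z.1 + d * z.2) z.1) :=
      (hF.comp (by fun_prop : Measurable fun z : ℝ × ℝ =>
        (ζ z.1 + d * z.2, z.1))).stronglyMeasurable
    simp only [hg, intervalIntegral.integral_of_le zero_le_one]
    exact this.integral_prod_right.measurable
  have gcm : ∀ x, Measurable fun τ => g x τ := by
    intro x
    have : StronglyMeasurable (fun z : ℝ × ℝ => F (x + d * z.2) z.1) :=
      (hF.comp (by fun_prop : Measurable fun z : ℝ × ℝ =>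
        (x + d * z.2, z.1))).stronglyMeasurable
    simp only [hg, intervalIntegral.integral_of_le zero_le_one]
    exact this.integral_prod_right.measurable
  have gb : ∀ x τ, |g x τ| ≤ M := by
    intro x τ
    have := intervalIntegral.norm_integral_le_of_norm_le_const (a := 0) (b := 1)
      (C := M) (f := fun θ => F (x + d * θ) τ) fun θ _ => hFb _ _
    simpa using this
  have gii : ∀ a b, IntervalIntegrable (fun τ => g (ζ τ) τ) volume a b :=
    bdd_ii gm fun τ => gb _ τ
  have ζL : ∀ a b, |ζ a - ζ b| ≤ K * |a - b| := fun a b => by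
    have := hζ.dist_le_mul a b
    rwa [Real.dist_eq, Real.dist_eq] at this
  -- derivative of H
  have HD : ∀ r, 0 < r → DifferentiableAt ℝ ζ r →
      HasDerivAt (fun x => ∫ τ in (1:ℝ)..x, g (ζ τ) τ) (g (ζ r) r) r →
      HasDerivAt (fun r => P (ζ r) r) (deriv ζ r * G (ζ r) r - g (ζ r) r) r := by
    intro r hr hdζ hdg
    have herr : HasDerivAt (fun q => P (ζ q) q - ζ q * G (ζ r) r + ∫ τ in (1:ℝ)..q, g (ζ τ) τ) 0 r := by
      refine hasDerivAt_zero_of_quad (C := C * (K + 1) * K + C * K) ?_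
      filter_upwards [lt_mem_nhds hr] with q hq
      have e : (P (ζ q) q - ζ q * G (ζ r) r + ∫ τ in (1:ℝ)..q, g (ζ τ) τ) -
          (P (ζ r) r - ζ r * G (ζ r) r + ∫ τ in (1:ℝ)..r, g (ζ τ) τ) =
          (P (ζ q) q - P (ζ r) q - (ζ q - ζ r) * G (ζ r) r) +
          ∫ τ in r..q, (g (ζ τ) τ - g (ζ r) τ) := by
        rw [intervalIntegral.integral_sub (gii _ _) (bdd_ii (gcm _) (fun τ => gb _ τ) _ _)]
        have h1 := Pg (ζ r) r q hr hq
        have h2 := intervalIntegral.integral_interval_sub_left (gii 1 q) (gii 1 r)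
        linarith
      rw [e]
      refine (abs_add_le _ _).trans ?_
      have h1 := Pest (ζ r) (ζ q) r q hr hq
      have h2 : ‖∫ τ in r..q, (g (ζ τ) τ - g (ζ r) τ)‖ ≤ (C * (K * |q - r|)) * |q - r| := by
        refine intervalIntegral.norm_integral_le_of_norm_le_const fun τ hτ => ?_
        refine (gL _ _ _).trans (mul_le_mul_of_nonneg_left ((ζL τ r).trans ?_) hC0)
        refine mul_le_mul_of_nonneg_left ?_ K.2
        exact abs_sub_left_of_mem_uIcc (uIoc_subset_uIcc hτ)
      rw [Real.norm_eq_abs] at h2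
      have h3 : C * (|ζ q - ζ r| + |q - r|) * |ζ q - ζ r| ≤
          C * (K * |q - r| + |q - r|) * (K * |q - r|) := by
        have := ζL q r
        have := K.2
        gcongr
      nlinarith [h1, h2, h3]
    have h := (herr.add (hdζ.hasDerivAt.mul_const (G (ζ r) r))).sub hdg
    have h' := h.congr_of_eventuallyEq (f₁ := fun r => P (ζ r) r) (Eventually.of_forall fun q => by
      simp only [Pi.add_apply, Pi.sub_apply]; ring)
    have e2 : deriv ζ r * G (ζ r) r - g (ζ r) r = 0 + deriv ζ r * G (ζ r) r - g (ζ r) r := by ring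
    rw [e2]
    exact h'
  have HL : LipschitzOnWith (⟨M, hM0⟩ * K + ⟨M, hM0⟩) (fun r => P (ζ r) r) (uIcc s t) := by
    refine LipschitzOnWith.of_dist_le_mul fun a ha b hb => ?_
    rw [uIcc_of_le hst] at ha hb
    have ha0 : 0 < a := hs.trans_le ha.1
    have hb0 : 0 < b := hs.trans_le hb.1
    rw [Real.dist_eq, Real.dist_eq]
    have e : P (ζ a) a - P (ζ b) b = (P (ζ a) a - P (ζ b) a) + (P (ζ b) a - P (ζ b) b) := by ring
    rw [e]
    refine (abs_add_le _ _).trans ?_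
    have h1 := PL (ζ b) (ζ a) a
    have h2 := PT (ζ b) b a hb0 ha0
    have h3 := mul_le_mul_of_nonneg_left (ζL a b) hM0
    push_cast
    show _ ≤ (M * K + M) * |a - b|
    linarith
  have hfin := HL.absolutelyContinuousOnInterval.integral_deriv_eq_sub
  show P (ζ t) t - P (ζ s) s = _
  rw [← hfin]
  refine intervalIntegral.integral_congr_ae ?_
  have hli : LocallyIntegrable (fun τ => g (ζ τ) τ) volume := by
    refine (locallyIntegrable_const M).mono gm.aestronglyMeasurable
      (Eventually.of_forall fun τ => ?_)
    exact (gb _ _).trans (le_abs_self M)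
  filter_upwards [hζ.ae_differentiableAt_real, _root_.LocallyIntegrable.ae_hasDerivAt_integral hli] with r h1 h2 hr
  rw [uIoc_of_le hst] at hr
  exact (HD r (hs.trans hr.1) h1 (h2 1)).deriv

lemma chain_lim (hu : Measurable (Function.uncurry u)) (hF : Measurable (Function.uncurry F))
    (hub : ∀ x t, |u x t| ≤ M) (hFb : ∀ x t, |F x t| ≤ M)
    (hUx : ∀ x y t, U y t - U x t = ∫ z in x..y, u z t)
    (hUt : ∀ x s t, 0 < s → 0 < t → U x t - U x s = -∫ τ in s..t, F x τ)
    {ζ : ℝ → ℝ} {K : NNReal} (hζ : LipschitzWith K ζ)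
    (dn : ℕ → ℝ) (hdn : ∀ n, dn n ≠ 0) (hd0 : Tendsto dn atTop (𝓝 0))
    (v w : ℝ → ℝ)
    (hv : ∀ τ, 0 < τ → ∀ θ ∈ Ioc (0:ℝ) 1,
      Tendsto (fun n => u (ζ τ + dn n * θ) τ) atTop (𝓝 (v τ)))
    (hw : ∀ τ, 0 < τ → ∀ θ ∈ Ioc (0:ℝ) 1,
      Tendsto (fun n => F (ζ τ + dn n * θ) τ) atTop (𝓝 (w τ)))
    (s t : ℝ) (hs : 0 < s) (hst : s ≤ t) :
    U (ζ t) t - U (ζ s) s = ∫ τ in s..t, (deriv ζ τ * v τ - w τ) := by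
  have hM0 : 0 ≤ M := (abs_nonneg _).trans (hub 0 0)
  have UL : ∀ x y t, |U y t - U x t| ≤ M * |y - x| := by
    intro x y t
    rw [hUx, ← Real.norm_eq_abs]
    exact intervalIntegral.norm_integral_le_of_norm_le_const fun z _ => hub z t
  have Uc : ∀ t, Continuous fun x => U x t := by
    intro t
    have : LipschitzWith ⟨M, hM0⟩ fun x => U x t :=
      LipschitzWith.of_dist_le_mul fun x y => by
        rw [Real.dist_eq, Real.dist_eq]; exact UL y x t
    exact this.continuous
  have ζm : Measurable ζ := hζ.continuous.measurable
  have key := fun n => chain_avg hu hF hub hFb hUx hUt hζ (dn n) (hdn n) s t hs hst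
  have avgl : ∀ (h : ℝ → ℝ) (x l : ℝ) (_ : Measurable h) (_ : ∀ y, |h y| ≤ M)
      (_ : ∀ θ ∈ Ioc (0:ℝ) 1, Tendsto (fun n => h (x + dn n * θ)) atTop (𝓝 l)),
      Tendsto (fun n => ∫ θ in (0:ℝ)..1, h (x + dn n * θ)) atTop (𝓝 l) := by
    intro h x l hm hb hl
    have := intervalIntegral.tendsto_integral_filter_of_dominated_convergence (a := 0) (b := 1)
      (μ := volume) (l := atTop) (F := fun n θ => h (x + dn n * θ)) (f := fun _ => l)
      (fun _ => M)
      (Eventually.of_forall fun n => (hm.comp (by fun_prop)).aestronglyMeasurable)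
      (Eventually.of_forall fun n => Eventually.of_forall fun θ _ => hb _)
      intervalIntegrable_const
      (Eventually.of_forall fun θ hθ => hl θ (by rwa [uIoc_of_le zero_le_one] at hθ))
    simpa using this
  have L1 : ∀ r, Tendsto (fun n => ∫ θ in (0:ℝ)..1, U (ζ r + dn n * θ) r) atTop
      (𝓝 (U (ζ r) r)) := by
    intro r
    have hbd : ∀ n, ‖(∫ θ in (0:ℝ)..1, U (ζ r + dn n * θ) r) - U (ζ r) r‖ ≤ M * |dn n| := by
      intro n
      have e : U (ζ r) r = ∫ θ in (0:ℝ)..1, U (ζ r) r := by simp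
      have hii : IntervalIntegrable (fun θ => U (ζ r + dn n * θ) r) volume 0 1 :=
        ((Uc r).comp (by fun_prop : Continuous fun θ : ℝ => ζ r + dn n * θ)).intervalIntegrable _ _
      rw [e, ← intervalIntegral.integral_sub hii intervalIntegrable_const]
      have := intervalIntegral.norm_integral_le_of_norm_le_const (a := 0) (b := 1)
        (C := M * |dn n|) (f := fun θ => U (ζ r + dn n * θ) r - U (ζ r) r) fun θ hθ => by
          rw [uIoc_of_le zero_le_one] at hθ
          refine (UL _ _ _).trans (mul_le_mul_of_nonneg_left ?_ hM0)
          rw [add_sub_cancel_left, abs_mul, abs_of_pos hθ.1]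
          exact mul_le_of_le_one_right (abs_nonneg _) hθ.2
      simpa using this
    refine tendsto_iff_norm_sub_tendsto_zero.2 (squeeze_zero (fun _ => norm_nonneg _) hbd ?_)
    simpa using (hd0.abs).const_mul M
  have Lr : Tendsto (fun n => ∫ τ in s..t, (deriv ζ τ * (∫ θ in (0:ℝ)..1, u (ζ τ + dn n * θ) τ)
        - ∫ θ in (0:ℝ)..1, F (ζ τ + dn n * θ) τ)) atTop
      (𝓝 (∫ τ in s..t, (deriv ζ τ * v τ - w τ))) := by
    refine intervalIntegral.tendsto_integral_filter_of_dominated_convergence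
      (fun _ => K * M + M) ?_ ?_ intervalIntegrable_const ?_
    · refine Eventually.of_forall fun n => Measurable.aestronglyMeasurable ?_
      refine ((measurable_deriv ζ).mul ?_).sub ?_
      · have : StronglyMeasurable (fun z : ℝ × ℝ => u (ζ z.1 + dn n * z.2) z.1) :=
          (hu.comp (by fun_prop : Measurable fun z : ℝ × ℝ =>
            (ζ z.1 + dn n * z.2, z.1))).stronglyMeasurable
        simp only [intervalIntegral.integral_of_le zero_le_one]
        exact this.integral_prod_right.measurable
      · have : StronglyMeasurable (fun z : ℝ × ℝ => F (ζ z.1 + dn n * z.2) z.1) :=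
          (hF.comp (by fun_prop : Measurable fun z : ℝ × ℝ =>
            (ζ z.1 + dn n * z.2, z.1))).stronglyMeasurable
        simp only [intervalIntegral.integral_of_le zero_le_one]
        exact this.integral_prod_right.measurable
    · refine Eventually.of_forall fun n => Eventually.of_forall fun τ _ => ?_
      have h1 : ‖deriv ζ τ‖ ≤ K := norm_deriv_le_of_lipschitz hζ
      have h2 : ‖∫ θ in (0:ℝ)..1, u (ζ τ + dn n * θ) τ‖ ≤ M * |1 - 0| :=
        intervalIntegral.norm_integral_le_of_norm_le_const fun θ _ => hub _ _
      have h3 : ‖∫ θ in (0:ℝ)..1, F (ζ τ + dn n * θ) τ‖ ≤ M * |1 - 0| :=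
        intervalIntegral.norm_integral_le_of_norm_le_const fun θ _ => hFb _ _
      simp only [sub_zero, abs_one, mul_one] at h2 h3
      refine (norm_sub_le _ _).trans (add_le_add ?_ h3)
      rw [norm_mul]
      exact mul_le_mul h1 h2 (norm_nonneg _) K.2
    · refine Eventually.of_forall fun τ hτ => ?_
      rw [uIoc_of_le hst] at hτ
      have hτ0 := hs.trans hτ.1
      exact ((avgl (fun x => u x τ) (ζ τ) (v τ) (hu.comp (measurable_id.prodMk measurable_const))
        (fun y => hub y τ) (hv τ hτ0)).const_mul _).sub
        (avgl (fun x => F x τ) (ζ τ) (w τ) (hF.comp (measurable_id.prodMk measurable_const))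
        (fun y => hFb y τ) (hw τ hτ0))
  have Ll := (L1 t).sub (L1 s)
  simp_rw [key] at Ll
  exact tendsto_nhds_unique Ll Lr

end chain

lemma trace_lim {g gp : ℝ → ℝ} {S : Set ℝ} (hS : IsOpen S) {x l : ℝ}
    (hg : ∀ y, Tendsto g (𝓝[>] y) (𝓝 (gp y))) (h : Tendsto g (𝓝[S] x) (𝓝 l)) :
    Tendsto gp (𝓝[S] x) (𝓝 l) := by
  rw [(closed_nhds_basis l).tendsto_right_iff]
  intro V hV
  have h1 : ∀ᶠ y in 𝓝[S] x, g y ∈ V := h hV.1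
  have h2 := eventually_eventually_nhdsWithin.2 h1
  filter_upwards [h2, self_mem_nhdsWithin] with y hy hyS
  rw [hS.nhdsWithin_eq hyS] at hy
  exact hV.2.mem_of_tendsto (hg y) (hy.filter_mono nhdsWithin_le_nhds)

def fxm (fl fr : ℝ → ℝ) (x v : ℝ) : ℝ := if x ≤ 0 then fl v else fr v

lemma dflux_left {fl fr : ℝ → ℝ} (x : ℝ) {g : ℝ → ℝ} {v : ℝ} (hl : Continuous fl)
    (hr : Continuous fr) (hg : Tendsto g (𝓝[<] x) (𝓝 v)) :
    Tendsto (fun y => dflux fl fr y (g y)) (𝓝[<] x) (𝓝 (fxm fl fr x v)) := by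
  unfold fxm
  split_ifs with h
  · refine ((hl.tendsto v).comp hg).congr' ?_
    filter_upwards [self_mem_nhdsWithin] with y hy
    simp only [dflux, Function.comp]
    rw [if_pos (lt_of_lt_of_le hy h)]
  · refine ((hr.tendsto v).comp hg).congr' ?_
    filter_upwards [nhdsWithin_le_nhds (lt_mem_nhds (not_le.1 h))] with y hy
    simp only [dflux, Function.comp]
    rw [if_neg (not_lt.2 (le_of_lt hy))]

lemma dflux_right {fl fr : ℝ → ℝ} (x : ℝ) {g : ℝ → ℝ} {v : ℝ} (hl : Continuous fl)
    (hr : Continuous fr) (hg : Tendsto g (𝓝[>] x) (𝓝 v)) :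
    Tendsto (fun y => dflux fl fr y (g y)) (𝓝[>] x) (𝓝 (dflux fl fr x v)) := by
  by_cases h : x < 0
  · have e : dflux fl fr x v = fl v := if_pos h
    rw [e]
    refine ((hl.tendsto v).comp hg).congr' ?_
    filter_upwards [nhdsWithin_le_nhds (gt_mem_nhds h)] with y hy
    simp only [dflux, Function.comp]
    rw [if_pos hy]
  · have e : dflux fl fr x v = fr v := if_neg h
    rw [e]
    refine ((hr.tendsto v).comp hg).congr' ?_
    filter_upwards [self_mem_nhdsWithin] with y hy
    simp only [dflux, Function.comp]
    rw [if_neg (not_lt.2 ((not_lt.1 h).trans (le_of_lt hy)))]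

lemma dflux_meas {fl fr : ℝ → ℝ} (hl : Continuous fl) (hr : Continuous fr) :
    Measurable (fun z : ℝ × ℝ => dflux fl fr z.1 z.2) := by
  unfold dflux
  refine Measurable.ite (measurableSet_lt measurable_fst measurable_const) ?_ ?_
  · exact hl.measurable.comp measurable_snd
  · exact hr.measurable.comp measurable_snd

lemma dflux_bd {fl fr : ℝ → ℝ} {M N : ℝ} (h : ∀ v, |v| ≤ M → |fl v| ≤ N ∧ |fr v| ≤ N)
    (x v : ℝ) (hv : |v| ≤ M) : |dflux fl fr x v| ≤ N := by
  unfold dflux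
  split_ifs
  · exact (h v hv).1
  · exact (h v hv).2

lemma fxm_bd {fl fr : ℝ → ℝ} {M N : ℝ} (h : ∀ v, |v| ≤ M → |fl v| ≤ N ∧ |fr v| ≤ N)
    (x v : ℝ) (hv : |v| ≤ M) : |fxm fl fr x v| ≤ N := by
  unfold fxm
  split_ifs
  · exact (h v hv).1
  · exact (h v hv).2

lemma bdd_li {h : ℝ → ℝ} {M : ℝ} (hm : Measurable h) (hb : ∀ x, |h x| ≤ M) :
    LocallyIntegrable h volume := by
  refine (locallyIntegrable_const M).mono hm.aestronglyMeasurable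
    (Eventually.of_forall fun τ => ?_)
  exact (hb _).trans (le_abs_self M)

lemma ae_nonneg_of_int {h : ℝ → ℝ} {M : ℝ} (hm : Measurable h) (hb : ∀ x, |h x| ≤ M)
    (hi : ∀ s t, 0 < s → s ≤ t → 0 ≤ ∫ τ in s..t, h τ) : ∀ᵐ t : ℝ, 0 < t → 0 ≤ h t := by
  filter_upwards [_root_.LocallyIntegrable.ae_hasDerivAt_integral (bdd_li hm hb)] with t ht ht0
  have h1 := (hasDerivAt_iff_tendsto_slope.1 (ht 1)).mono_left
    (nhdsWithin_mono t (show Ioi t ⊆ {t}ᶜ from fun y hy => ne_of_gt hy))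
  refine ge_of_tendsto h1 ?_
  filter_upwards [self_mem_nhdsWithin] with y hy
  rw [slope_def_field, intervalIntegral.integral_interval_sub_left (bdd_ii hm hb _ _)
    (bdd_ii hm hb _ _)]
  exact div_nonneg (hi t y ht0 (le_of_lt hy)) (sub_nonneg.2 (le_of_lt hy))

namespace ABSol
variable {fl fr : ℝ → ℝ} {A B : ℝ} {u0 : ℝ → ℝ} (sol : ABSol fl fr A B u0)

def vm (x t : ℝ) : ℝ := if 0 < t then sol.um x t else 0
def vp (x t : ℝ) : ℝ := if 0 < t then sol.up x t else 0
def U (x t : ℝ) : ℝ := (∫ y in (0:ℝ)..x, sol.u y t) - ∫ τ in (1:ℝ)..t, dflux fl fr 0 (sol.vp 0 τ)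

lemma vm_pos {x t : ℝ} (ht : 0 < t) : sol.vm x t = sol.um x t := if_pos ht
lemma vp_pos {x t : ℝ} (ht : 0 < t) : sol.vp x t = sol.up x t := if_pos ht

lemma vm_lim {x t : ℝ} (ht : 0 < t) : Tendsto (fun y => sol.u y t) (𝓝[<] x) (𝓝 (sol.vm x t)) := by
  rw [vm_pos sol ht]; exact sol.um_spec x t ht
lemma vp_lim {x t : ℝ} (ht : 0 < t) : Tendsto (fun y => sol.u y t) (𝓝[>] x) (𝓝 (sol.vp x t)) := by
  rw [vp_pos sol ht]; exact sol.up_spec x t ht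

lemma seq_right (x : ℝ) {θ : ℝ} (hθ : 0 < θ) :
    Tendsto (fun n : ℕ => x + (1 / ((n:ℝ) + 1)) * θ) atTop (𝓝[>] x) := by
  refine tendsto_nhdsWithin_iff.2 ⟨?_, Eventually.of_forall fun n => ?_⟩
  · simpa using (eps_tendsto.mul_const θ).const_add x
  · have := mul_pos (eps_pos n) hθ
    simp only [mem_Ioi]; linarith

lemma seq_left (x : ℝ) {θ : ℝ} (hθ : 0 < θ) :
    Tendsto (fun n : ℕ => x + (-(1 / ((n:ℝ) + 1))) * θ) atTop (𝓝[<] x) := by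
  refine tendsto_nhdsWithin_iff.2 ⟨?_, Eventually.of_forall fun n => ?_⟩
  · simpa using (eps_tendsto.neg.mul_const θ).const_add x
  · have := mul_pos (eps_pos n) hθ
    simp only [mem_Iio]; linarith

lemma trace_meas (v : ℝ → ℝ → ℝ) (d : ℕ → ℝ)
    (h : ∀ x t, 0 < t → Tendsto (fun n => sol.u (x + d n) t) atTop (𝓝 (v x t)))
    (h0 : ∀ x t, ¬ 0 < t → v x t = 0) : Measurable (Function.uncurry v) := by
  refine measurable_of_tendsto_metrizable
    (f := fun n (z : ℝ × ℝ) => if 0 < z.2 then sol.u (z.1 + d n) z.2 else 0) (fun n => ?_) ?_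
  · refine Measurable.ite (measurableSet_lt measurable_const measurable_snd) ?_ measurable_const
    exact sol.meas.comp (by fun_prop : Measurable fun z : ℝ × ℝ => (z.1 + d n, z.2))
  · rw [tendsto_pi_nhds]
    intro z
    by_cases hz : 0 < z.2
    · simp only [hz, if_true]; exact h z.1 z.2 hz
    · simp only [hz, if_false, Function.uncurry, h0 z.1 z.2 hz]; exact tendsto_const_nhds

lemma vp_meas : Measurable (Function.uncurry sol.vp) := by
  refine sol.trace_meas _ (fun n => (1 / ((n:ℝ) + 1)) * 1) (fun x t ht => ?_) fun x t ht => if_neg ht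
  exact (sol.vp_lim ht).comp (seq_right x one_pos)

lemma vm_meas : Measurable (Function.uncurry sol.vm) := by
  refine sol.trace_meas _ (fun n => (-(1 / ((n:ℝ) + 1))) * 1) (fun x t ht => ?_)
    fun x t ht => if_neg ht
  exact (sol.vm_lim ht).comp (seq_left x one_pos)

variable {M N : ℝ}

lemma vp_bd (hM : ∀ x t, |sol.u x t| ≤ M) (x t : ℝ) : |sol.vp x t| ≤ M := by
  by_cases ht : 0 < t
  · exact le_of_tendsto (sol.vp_lim (x := x) ht).abs (Eventually.of_forall fun y => hM y t)
  · rw [vp, if_neg ht, abs_zero]; exact (abs_nonneg _).trans (hM 0 0)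

lemma vm_bd (hM : ∀ x t, |sol.u x t| ≤ M) (x t : ℝ) : |sol.vm x t| ≤ M := by
  by_cases ht : 0 < t
  · exact le_of_tendsto (sol.vm_lim (x := x) ht).abs (Eventually.of_forall fun y => hM y t)
  · rw [vm, if_neg ht, abs_zero]; exact (abs_nonneg _).trans (hM 0 0)

lemma F_meas (hl : Continuous fl) (hr : Continuous fr) :
    Measurable (Function.uncurry fun x t => dflux fl fr x (sol.vp x t)) :=
  (dflux_meas hl hr).comp (measurable_fst.prodMk sol.vp_meas)

lemma F_meas1 (hl : Continuous fl) (hr : Continuous fr) (x : ℝ) :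
    Measurable (fun t => dflux fl fr x (sol.vp x t)) :=
  (sol.F_meas hl hr).comp (measurable_const.prodMk measurable_id)

lemma G_meas1 (hl : Continuous fl) (hr : Continuous fr) (x : ℝ) :
    Measurable (fun t => fxm fl fr x (sol.vm x t)) := by
  have h : Measurable fun t => sol.vm x t :=
    sol.vm_meas.comp (measurable_const.prodMk measurable_id)
  unfold fxm
  split_ifs
  · exact hl.measurable.comp h
  · exact hr.measurable.comp h

lemma mass (hl : Continuous fl) (hr : Continuous fr) (hM : ∀ x t, |sol.u x t| ≤ M)
    (hN : ∀ v, |v| ≤ M → |fl v| ≤ N ∧ |fr v| ≤ N) (hMN : M ≤ N)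
    (a b : ℝ) (hab : a ≤ b) (s t : ℝ) (hs : 0 < s) (hst : s ≤ t) :
    (∫ x in a..b, sol.u x s) - (∫ x in a..b, sol.u x t) +
      ∫ τ in s..t, (fxm fl fr a (sol.vm a τ) - dflux fl fr b (sol.vp b τ)) = 0 := by
  have hqm : Measurable (Function.uncurry fun x t => dflux fl fr x (sol.u x t)) :=
    (dflux_meas hl hr).comp (measurable_fst.prodMk sol.meas)
  refine le_antisymm ?_ ?_
  · have h := weak_limit (fun x t => - sol.u x t) (fun x t => - dflux fl fr x (sol.u x t)) N
      sol.meas.neg hqm.neg (fun x t => by rw [abs_neg]; exact (hM x t).trans hMN)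
      (fun x t => by rw [abs_neg]; exact dflux_bd hN _ _ (hM x t))
      (fun r t₀ ht => by
        have := sol.timeCont r t₀ ht
        refine this.congr fun t => ?_
        congr 1
        ext x
        rw [← abs_neg]; congr 1; ring)
      (fun φ h1 h2 _ h4 => by
        have := sol.weak φ h1 h2 h4
        rw [← neg_zero, ← this, ← integral_neg]
        refine le_of_eq ?_
        congr 1
        ext z
        ring) a b hab (fun τ => - fxm fl fr a (sol.vm a τ)) (fun τ => - dflux fl fr b (sol.vp b τ))
      (fun t ht => (dflux_left a hl hr (sol.vm_lim ht)).neg)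
      (fun t ht => (dflux_right b hl hr (sol.vp_lim ht)).neg) s t hs hst
    have e : ∀ τ, - fxm fl fr a (sol.vm a τ) - - dflux fl fr b (sol.vp b τ) =
      -(fxm fl fr a (sol.vm a τ) - dflux fl fr b (sol.vp b τ)) := fun τ => by ring
    simp_rw [e] at h
    simp only [intervalIntegral.integral_neg] at h
    linarith
  · exact weak_limit (fun x t => sol.u x t) (fun x t => dflux fl fr x (sol.u x t)) N
      sol.meas hqm (fun x t => (hM x t).trans hMN)
      (fun x t => dflux_bd hN _ _ (hM x t))
      sol.timeCont
      (fun φ h1 h2 _ h4 => (sol.weak φ h1 h2 h4).ge) a b hab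
      (fun τ => fxm fl fr a (sol.vm a τ)) (fun τ => dflux fl fr b (sol.vp b τ))
      (fun t ht => (dflux_left a hl hr (sol.vm_lim ht)))
      (fun t ht => (dflux_right b hl hr (sol.vp_lim ht))) s t hs hst

lemma rh (hl : Continuous fl) (hr : Continuous fr) (hM : ∀ x t, |sol.u x t| ≤ M)
    (hN : ∀ v, |v| ≤ M → |fl v| ≤ N ∧ |fr v| ≤ N) (hMN : M ≤ N)
    (a : ℝ) (s t : ℝ) (hs : 0 < s) (hst : s ≤ t) :
    ∫ τ in s..t, (fxm fl fr a (sol.vm a τ) - dflux fl fr a (sol.vp a τ)) = 0 := by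
  simpa using sol.mass hl hr hM hN hMN a a le_rfl s t hs hst

lemma mass2 (hl : Continuous fl) (hr : Continuous fr) (hM : ∀ x t, |sol.u x t| ≤ M)
    (hN : ∀ v, |v| ≤ M → |fl v| ≤ N ∧ |fr v| ≤ N) (hMN : M ≤ N)
    (a b : ℝ) (hab : a ≤ b) (s t : ℝ) (hs : 0 < s) (hst : s ≤ t) :
    (∫ x in a..b, sol.u x t) - (∫ x in a..b, sol.u x s) =
      (∫ τ in s..t, dflux fl fr a (sol.vp a τ)) - ∫ τ in s..t, dflux fl fr b (sol.vp b τ) := by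
  have h1 := sol.mass hl hr hM hN hMN a b hab s t hs hst
  have h2 := sol.rh hl hr hM hN hMN a s t hs hst
  have i1 := bdd_ii (sol.G_meas1 hl hr a) (fun τ => fxm_bd hN a _ (sol.vm_bd hM a τ)) s t
  have i2 := fun a => bdd_ii (sol.F_meas1 hl hr a) (fun τ => dflux_bd hN a _ (sol.vp_bd hM a τ)) s t
  rw [intervalIntegral.integral_sub i1 (i2 _)] at h1 h2
  linarith

lemma hUx (hM : ∀ x t, |sol.u x t| ≤ M) (x y t : ℝ) :
    sol.U y t - sol.U x t = ∫ z in x..y, sol.u z t := by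
  have hm : Measurable fun z => sol.u z t := sol.meas.comp (measurable_id.prodMk measurable_const)
  have := intervalIntegral.integral_interval_sub_left (bdd_ii hm (fun z => hM z t) 0 y)
    (bdd_ii hm (fun z => hM z t) 0 x)
  unfold U
  linarith

lemma hUt (hl : Continuous fl) (hr : Continuous fr) (hM : ∀ x t, |sol.u x t| ≤ M)
    (hN : ∀ v, |v| ≤ M → |fl v| ≤ N ∧ |fr v| ≤ N) (hMN : M ≤ N)
    (x s t : ℝ) (hs : 0 < s) (ht : 0 < t) :
    sol.U x t - sol.U x s = -∫ τ in s..t, dflux fl fr x (sol.vp x τ) := by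
  have main : ∀ s t, 0 < s → s ≤ t →
      sol.U x t - sol.U x s = -∫ τ in s..t, dflux fl fr x (sol.vp x τ) := by
    intro s t hs hst
    have i2 := fun a b => bdd_ii (sol.F_meas1 hl hr 0)
      (fun τ => dflux_bd hN 0 _ (sol.vp_bd hM 0 τ)) a b
    have h1 := intervalIntegral.integral_interval_sub_left (i2 1 t) (i2 1 s)
    unfold U
    rcases le_total 0 x with hx | hx
    · have := sol.mass2 hl hr hM hN hMN 0 x hx s t hs hst
      linarith
    · have := sol.mass2 hl hr hM hN hMN x 0 hx s t hs hst
      have e := fun r => intervalIntegral.integral_symm (μ := volume) (f := fun y => sol.u y r) 0 x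
      have e1 := e s
      have e2 := e t
      linarith
  rcases le_total s t with h | h
  · exact main s t hs h
  · have := main t s ht h
    rw [intervalIntegral.integral_symm s t] at this
    linarith

lemma chain_up (hl : Continuous fl) (hr : Continuous fr) (hM : ∀ x t, |sol.u x t| ≤ M)
    (hN : ∀ v, |v| ≤ M → |fl v| ≤ N ∧ |fr v| ≤ N) (hMN : M ≤ N)
    {ζ : ℝ → ℝ} {K : NNReal} (hζ : LipschitzWith K ζ) (s t : ℝ) (hs : 0 < s) (hst : s ≤ t) :
    sol.U (ζ t) t - sol.U (ζ s) s =
      ∫ τ in s..t, (deriv ζ τ * sol.vp (ζ τ) τ - dflux fl fr (ζ τ) (sol.vp (ζ τ) τ)) := by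
  refine chain_lim sol.meas (sol.F_meas hl hr) (fun x t => (hM x t).trans hMN)
    (fun x t => dflux_bd hN x _ (sol.vp_bd hM x t)) (sol.hUx hM) (sol.hUt hl hr hM hN hMN) hζ
    (fun n : ℕ => 1 / ((n:ℝ) + 1)) (fun n => (eps_pos n).ne') eps_tendsto _ _ ?_ ?_ s t hs hst
  · intro τ hτ θ hθ
    exact (sol.vp_lim hτ).comp (seq_right (ζ τ) hθ.1)
  · intro τ hτ θ hθ
    have := trace_lim (isOpen_Ioi (a := ζ τ)) (fun y => sol.vp_lim (x := y) hτ) (sol.vp_lim hτ)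
    exact (dflux_right (ζ τ) hl hr this).comp (seq_right (ζ τ) hθ.1)

lemma chain_um (hl : Continuous fl) (hr : Continuous fr) (hM : ∀ x t, |sol.u x t| ≤ M)
    (hN : ∀ v, |v| ≤ M → |fl v| ≤ N ∧ |fr v| ≤ N) (hMN : M ≤ N)
    {ζ : ℝ → ℝ} {K : NNReal} (hζ : LipschitzWith K ζ) (s t : ℝ) (hs : 0 < s) (hst : s ≤ t) :
    sol.U (ζ t) t - sol.U (ζ s) s =
      ∫ τ in s..t, (deriv ζ τ * sol.vm (ζ τ) τ - fxm fl fr (ζ τ) (sol.vm (ζ τ) τ)) := by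
  refine chain_lim sol.meas (sol.F_meas hl hr) (fun x t => (hM x t).trans hMN)
    (fun x t => dflux_bd hN x _ (sol.vp_bd hM x t)) (sol.hUx hM) (sol.hUt hl hr hM hN hMN) hζ
    (fun n : ℕ => -(1 / ((n:ℝ) + 1))) (fun n => neg_ne_zero.2 (eps_pos n).ne') (by simpa using eps_tendsto.neg) _ _ ?_ ?_ s t hs hst
  · intro τ hτ θ hθ
    exact (sol.vm_lim hτ).comp (seq_left (ζ τ) hθ.1)
  · intro τ hτ θ hθ
    have := trace_lim (isOpen_Iio (a := ζ τ)) (fun y => sol.vp_lim (x := y) hτ) (sol.vm_lim hτ)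
    exact (dflux_left (ζ τ) hl hr this).comp (seq_left (ζ τ) hθ.1)

lemma rh_ae (hl : Continuous fl) (hr : Continuous fr) (hM : ∀ x t, |sol.u x t| ≤ M)
    (hN : ∀ v, |v| ≤ M → |fl v| ≤ N ∧ |fr v| ≤ N) (hMN : M ≤ N) :
    ∀ᵐ t : ℝ, 0 < t → fl (sol.um 0 t) = fr (sol.up 0 t) := by
  have hm := (sol.G_meas1 hl hr 0).sub (sol.F_meas1 hl hr 0)
  have hb : ∀ t, |fxm fl fr 0 (sol.vm 0 t) - dflux fl fr 0 (sol.vp 0 t)| ≤ N + N := fun t =>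
    (abs_sub _ _).trans (add_le_add (fxm_bd hN 0 _ (sol.vm_bd hM 0 t))
      (dflux_bd hN 0 _ (sol.vp_bd hM 0 t)))
  have h1 := ae_nonneg_of_int hm hb fun s t hs hst =>
    (sol.rh hl hr hM hN hMN 0 s t hs hst).ge
  have h2 := ae_nonneg_of_int hm.neg (fun t => (abs_neg _).trans_le (hb t)) fun s t hs hst => by
    have := sol.rh hl hr hM hN hMN 0 s t hs hst
    simp only [Pi.neg_apply, Pi.sub_apply, intervalIntegral.integral_neg]
    rw [this, neg_zero]
  filter_upwards [h1, h2] with t h1 h2 ht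
  have h1 := h1 ht
  have h2 := h2 ht
  simp only [Pi.neg_apply, Pi.sub_apply, fxm, dflux, le_refl, if_true, lt_irrefl, if_false,
    sol.vm_pos ht, sol.vp_pos ht] at h1 h2
  linarith

lemma E_eq (f : ℝ → ℝ) (k v : ℝ) : Real.sign (v - k) * (f v - f k) =
    if v ≤ k then f k - f v else f v - f k := by
  rcases lt_trichotomy v k with h | h | h
  · rw [Real.sign_of_neg (sub_neg.2 h), if_pos h.le]; ring
  · subst h; simp
  · rw [Real.sign_of_pos (sub_pos.2 h), if_neg (not_le.2 h)]; ring

lemma E_cont {f : ℝ → ℝ} (hf : Continuous f) (k : ℝ) :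
    Continuous fun v => Real.sign (v - k) * (f v - f k) := by
  simp_rw [E_eq]
  refine Continuous.if_le (by fun_prop) (by fun_prop) continuous_id continuous_const ?_
  intro v hv
  rw [show v = k from hv]

lemma E_abs (c d : ℝ) : |Real.sign c * d| ≤ |d| := by
  rw [abs_mul]
  refine mul_le_of_le_one_left (abs_nonneg _) ?_
  rcases Real.sign_apply_eq c with h | h | h <;> simp [h]

lemma sign_meas : Measurable Real.sign := by
  unfold Real.sign
  exact Measurable.ite measurableSet_Iio measurable_const
    (Measurable.ite measurableSet_Ioi measurable_const measurable_const)

lemma cAB_meas : Measurable (cAB A B) := by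
  unfold cAB
  exact Measurable.ite measurableSet_Iic measurable_const measurable_const

lemma ent_int (hl : Continuous fl) (hr : Continuous fr) (hM : ∀ x t, |sol.u x t| ≤ M)
    (hN : ∀ v, |v| ≤ M → |fl v| ≤ N ∧ |fr v| ≤ N) (hMN : M ≤ N)
    (s t : ℝ) (hs : 0 < s) (hst : s ≤ t) :
    0 ≤ ∫ τ in s..t, (Real.sign (sol.vm 0 τ - A) * (fl (sol.vm 0 τ) - fl A) -
      Real.sign (sol.vp 0 τ - B) * (fr (sol.vp 0 τ) - fr B)) := by
  have hc1 : ∀ x, |cAB A B x| ≤ |A| + |B| := fun x => by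
    unfold cAB; split_ifs
    · linarith [abs_nonneg B]
    · linarith [abs_nonneg A]
  have hc2 : ∀ x, |dflux fl fr x (cAB A B x)| ≤ |fl A| + |fr A| + |fr B| := fun x => by
    have := abs_nonneg (fl A); have := abs_nonneg (fr A); have := abs_nonneg (fr B)
    unfold cAB dflux; split_ifs
    · linarith
    · linarith
    · linarith
    · linarith
  have hN0 : 0 ≤ N := ((abs_nonneg _).trans (hM 0 0)).trans hMN
  have hcm : Measurable fun z : ℝ × ℝ => cAB A B z.1 := cAB_meas.comp measurable_fst
  have hum : Measurable fun z : ℝ × ℝ => sol.u z.1 z.2 := sol.meas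
  have h := weak_limit (fun x t => |sol.u x t - cAB A B x|)
    (fun x t => Real.sign (sol.u x t - cAB A B x) *
          (dflux fl fr x (sol.u x t) - dflux fl fr x (cAB A B x)))
    (N + (|A| + |B|) + (|fl A| + |fr A| + |fr B|))
    (continuous_abs.measurable.comp (hum.sub hcm))
    ((sign_meas.comp (hum.sub hcm)).mul (((dflux_meas hl hr).comp (measurable_fst.prodMk hum)).sub
      ((dflux_meas hl hr).comp (measurable_fst.prodMk hcm))))
    (fun x t => by
      rw [abs_abs]
      refine (abs_sub _ _).trans ?_
      have := hM x t; have := hc1 x; have := (abs_nonneg _).trans (hc2 x)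
      linarith)
    (fun x t => by
      refine (E_abs _ _).trans ((abs_sub _ _).trans ?_)
      have := dflux_bd hN x _ (hM x t); have := hc2 x; have := (abs_nonneg _).trans (hc1 x)
      linarith)
    (fun r t₀ ht => by
      refine squeeze_zero (fun t => integral_nonneg fun x => abs_nonneg _) (fun t => ?_)
        (sol.timeCont r t₀ ht)
      have hm1 : ∀ t, Measurable fun x => sol.u x t := fun t =>
        sol.meas.comp (measurable_id.prodMk measurable_const)
      have hfin : IsFiniteMeasure (volume.restrict (Icc (-r) r)) := ⟨by simp⟩
      refine integral_mono_of_nonneg (Eventually.of_forall fun x => abs_nonneg _) ?_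
        (Eventually.of_forall fun x => ?_)
      · refine Integrable.of_bound
          (continuous_abs.measurable.comp ((hm1 t).sub (hm1 t₀))).aestronglyMeasurable (M + M)
          (Eventually.of_forall fun x => ?_)
        simp only [Real.norm_eq_abs, abs_abs]
        exact (abs_sub _ _).trans (add_le_add (hM _ _) (hM _ _))
      · refine (abs_abs_sub_abs_le _ _).trans ?_
        rw [sub_sub_sub_cancel_right])
    sol.interfaceEntropy 0 0 le_rfl
    (fun τ => Real.sign (sol.vm 0 τ - A) * (fl (sol.vm 0 τ) - fl A))
    (fun τ => Real.sign (sol.vp 0 τ - B) * (fr (sol.vp 0 τ) - fr B))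
    (fun t ht => by
      refine (((E_cont hl A).tendsto _).comp (sol.vm_lim ht)).congr' ?_
      filter_upwards [self_mem_nhdsWithin] with y hy
      have hy : y < 0 := hy
      simp only [Function.comp, cAB, dflux, hy, hy.le, if_true])
    (fun t ht => by
      refine (((E_cont hr B).tendsto _).comp (sol.vp_lim ht)).congr' ?_
      filter_upwards [self_mem_nhdsWithin] with y hy
      have hy : 0 < y := hy
      simp only [Function.comp, cAB, dflux, not_lt.2 hy.le, not_le.2 hy, if_false]) s t hs hst
  simpa using h

lemma ent_ae (hl : Continuous fl) (hr : Continuous fr) (hM : ∀ x t, |sol.u x t| ≤ M)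
    (hN : ∀ v, |v| ≤ M → |fl v| ≤ N ∧ |fr v| ≤ N) (hMN : M ≤ N) (hAB : fl A = fr B)
    (hA : ∀ v, v ≤ A → fl A ≤ fl v) (hB : ∀ v, B ≤ v → fr B ≤ fr v) :
    ∀ᵐ t : ℝ, 0 < t → fl A ≤ fl (sol.um 0 t) := by
  have hvm : Measurable fun t => sol.vm 0 t :=
    sol.vm_meas.comp (measurable_const.prodMk measurable_id)
  have hvp : Measurable fun t => sol.vp 0 t :=
    sol.vp_meas.comp (measurable_const.prodMk measurable_id)
  have h1 := ae_nonneg_of_int (M := (N + |fl A|) + (N + |fr B|))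
    (((E_cont hl A).measurable.comp hvm).sub ((E_cont hr B).measurable.comp hvp))
    (fun t => by
      refine (abs_sub _ _).trans (add_le_add ?_ ?_)
      · exact (E_abs _ _).trans ((abs_sub _ _).trans
          (add_le_add (hN _ (sol.vm_bd hM 0 t)).1 le_rfl))
      · exact (E_abs _ _).trans ((abs_sub _ _).trans
          (add_le_add (hN _ (sol.vp_bd hM 0 t)).2 le_rfl)))
    (sol.ent_int hl hr hM hN hMN)
  filter_upwards [h1, sol.rh_ae hl hr hM hN hMN] with t h1 h2 ht
  have h1 := h1 ht
  have h2 := h2 ht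
  simp only [Pi.sub_apply, Function.comp, E_eq, sol.vm_pos ht, sol.vp_pos ht] at h1
  by_contra hcon
  push Not at hcon
  have c1 : ¬ sol.um 0 t ≤ A := fun h => absurd (hA _ h) (not_le.2 hcon)
  have c2 : sol.up 0 t ≤ B := by
    by_contra h
    have := hB _ (not_le.1 h).le
    linarith
  rw [if_neg c1, if_pos c2] at h1
  linarith

end ABSol

lemma tang {f : ℝ → ℝ} {a : ℝ} (hf : ContDiff ℝ 2 f) (ha : 0 < a)
    (h2 : ∀ w : ℝ, a ≤ deriv (deriv f) w) (v w : ℝ) : f v + deriv f v * (w - v) ≤ f w := by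
  have hd : Differentiable ℝ f := hf.differentiable (by norm_num)
  have hd2 : Differentiable ℝ (deriv f) :=
    ((contDiff_succ_iff_deriv (n := 1)).1 hf).2.2.differentiable (by norm_num)
  have hc : ConvexOn ℝ univ f := convexOn_univ_of_deriv2_nonneg hd hd2
    (fun x => ha.le.trans (h2 x))
  rcases lt_trichotomy v w with h | h | h
  · have := hc.deriv_le_slope (mem_univ v) (mem_univ w) h (hd v)
    rw [slope_def_field, le_div_iff₀ (sub_pos.2 h)] at this
    linarith
  · subst h; simp
  · have := hc.slope_le_deriv (mem_univ w) (mem_univ v) h (hd v)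
    rw [slope_def_field, div_le_iff₀ (sub_pos.2 h)] at this
    linarith

lemma ae_deriv_zero (ζ : ℝ → ℝ) : ∀ᵐ t : ℝ, ζ t = 0 → ∀ d, HasDerivAt ζ d t → d = 0 := by
  have hc := (countable_setOfPred_isolated_right_within (s := {t : ℝ | ζ t = 0})).ae_notMem volume
  filter_upwards [hc] with t ht h0 d hd
  by_contra hne
  apply ht
  refine ⟨h0, ?_⟩
  have h1 := hd.eventually_ne (c := 0) hne
  rw [← empty_mem_iff_bot]
  have h2 : ∀ᶠ z in 𝓝[{t | ζ t = 0} ∩ Ioi t] t, ζ z ≠ 0 :=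
    h1.filter_mono (nhdsWithin_mono t (fun y hy => ne_of_gt hy.2))
  filter_upwards [h2, self_mem_nhdsWithin] with z hz hz2
  exact hz hz2.1

lemma lip_comp_zero {Γ Z : ℝ → ℝ} {C t : ℝ} (hΓ : ∀ x y, |Γ x - Γ y| ≤ C * |x - y|)
    (hZ : HasDerivAt Z 0 t) : HasDerivAt (fun q => Γ (Z q)) 0 t := by
  rw [hasDerivAt_iff_isLittleO] at hZ ⊢
  refine Asymptotics.IsBigO.trans_isLittleO (Asymptotics.IsBigO.of_bound C ?_) hZ
  filter_upwards with q
  simpa using hΓ (Z q) (Z t)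

def Gam (A B x : ℝ) : ℝ := if x < 0 then A * x else B * x

lemma Gam_eq (A B x : ℝ) : Gam A B x = A * min x 0 + B * max x 0 := by
  unfold Gam
  split_ifs with h
  · rw [min_eq_left h.le, max_eq_right h.le]; ring
  · rw [min_eq_right (not_lt.1 h), max_eq_left (not_lt.1 h)]; ring

lemma Gam_lip (A B x y : ℝ) : |Gam A B x - Gam A B y| ≤ (|A| + |B|) * |x - y| := by
  rw [Gam_eq, Gam_eq]
  have e : A * min x 0 + B * max x 0 - (A * min y 0 + B * max y 0) =
    A * (min x 0 - min y 0) + B * (max x 0 - max y 0) := by ring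
  rw [e, add_mul]
  refine (abs_add_le _ _).trans (add_le_add ?_ ?_)
  · rw [abs_mul]
    refine mul_le_mul_of_nonneg_left ?_ (abs_nonneg _)
    have := abs_min_sub_min_le_max x 0 y 0
    simpa using this
  · rw [abs_mul]
    refine mul_le_mul_of_nonneg_left ?_ (abs_nonneg _)
    have := abs_max_sub_max_le_max x 0 y 0
    simpa using this

lemma fxm_meas {fl fr : ℝ → ℝ} (hl : Continuous fl) (hr : Continuous fr) :
    Measurable (fun z : ℝ × ℝ => fxm fl fr z.1 z.2) := by
  unfold fxm
  refine Measurable.ite (measurableSet_le measurable_fst measurable_const) ?_ ?_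
  · exact hl.measurable.comp measurable_snd
  · exact hr.measurable.comp measurable_snd

namespace ABSol
variable {fl fr : ℝ → ℝ} {A B : ℝ} {u0 : ℝ → ℝ} (sol : ABSol fl fr A B u0) {M N T : ℝ}

def Good (T : ℝ) (Z : ℝ → ℝ) : Prop := ∀ᵐ t : ℝ, t ∈ Ioo 0 T →
  (Z t < 0 → HasDerivAt Z (deriv fl (sol.vm (Z t) t)) t) ∧
  (0 < Z t → HasDerivAt Z (deriv fr (sol.vm (Z t) t)) t) ∧
  (Z t = 0 → HasDerivAt Z 0 t ∧ fl (sol.vm 0 t) = fl A)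

lemma Good.congr {Z Z' : ℝ → ℝ} (h : sol.Good T Z) (he : EqOn Z Z' (Icc 0 T)) :
    sol.Good T Z' := by
  filter_upwards [h] with t ht htT
  have hev : Z' =ᶠ[𝓝 t] Z := by
    filter_upwards [Icc_mem_nhds htT.1 htT.2] with q hq
    exact (he hq).symm
  rw [hev.eq_of_nhds, hev.hasDerivAt_iff, hev.hasDerivAt_iff, hev.hasDerivAt_iff]
  exact ht htT

lemma gic_ext (hM : ∀ x t, |sol.u x t| ≤ M) {K₀ : NNReal}
    (hK : ∀ v, |v| ≤ M → |deriv fl v| ≤ K₀ ∧ |deriv fr v| ≤ K₀) (hT : 0 < T) {ζ : ℝ → ℝ}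
    (hζ : IsABgic T fl fr (fl A) sol ζ) :
    ∃ Z, LipschitzWith K₀ Z ∧ EqOn ζ Z (Icc 0 T) ∧ sol.Good T Z := by
  obtain ⟨⟨K, hL⟩, hae⟩ := hζ
  obtain ⟨Z1, hZ1, hE1⟩ := hL.extend_real
  rw [← restrict_Ioo_eq_restrict_Icc, ae_restrict_iff' measurableSet_Ioo] at hae
  have hg1 : sol.Good T Z1 := by
    filter_upwards [hae, ae_deriv_zero Z1, hZ1.ae_differentiableAt_real] with t ht h0 hd htT
    have hev : Z1 =ᶠ[𝓝 t] ζ := by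
      filter_upwards [Icc_mem_nhds htT.1 htT.2] with q hq
      exact (hE1 hq).symm
    obtain ⟨h1, h2, h3⟩ := ht htT
    rw [← hev.eq_of_nhds] at h1 h2 h3
    refine ⟨fun h => ?_, fun h => ?_, fun h => ⟨?_, ?_⟩⟩
    · rw [hev.hasDerivAt_iff, sol.vm_pos htT.1]; exact (h1 h).1
    · rw [hev.hasDerivAt_iff, sol.vm_pos htT.1]; exact (h2 h).1
    · have := hd.hasDerivAt
      rwa [h0 h _ this] at this
    · rw [sol.vm_pos htT.1]; exact (h3 h).1
  have hL1 : LipschitzOnWith K₀ Z1 (Icc 0 T) := by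
    refine LipschitzOnWith.of_dist_le_mul fun p hp q hq => ?_
    rw [Real.dist_eq, Real.dist_eq]
    have h1 := ((hZ1.lipschitzOnWith (s := uIcc q p)).absolutelyContinuousOnInterval).integral_deriv_eq_sub
    rw [← h1, ← Real.norm_eq_abs]
    refine intervalIntegral.norm_integral_le_of_norm_le_const_ae ?_
    have hne : ∀ᵐ r : ℝ, r ≠ T := compl_mem_ae_iff.2 (measure_singleton T)
    filter_upwards [hg1, hne] with r hr hrT hrm
    have hr1 : r ∈ Ioo 0 T := by
      have h1 := hrm.1
      have h2 := hrm.2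
      refine ⟨lt_of_le_of_lt (le_min hq.1 hp.1) h1, lt_of_le_of_ne (h2.trans (max_le hq.2 hp.2)) hrT⟩
    obtain ⟨h1, h2, h3⟩ := hr hr1
    rw [Real.norm_eq_abs]
    rcases lt_trichotomy (Z1 r) 0 with h | h | h
    · rw [(h1 h).deriv]; exact (hK _ (sol.vm_bd hM _ _)).1
    · rw [(h3 h).1.deriv, abs_zero]; exact K₀.2
    · rw [(h2 h).deriv]; exact (hK _ (sol.vm_bd hM _ _)).2
  obtain ⟨Z, hZ, hE⟩ := hL1.extend_real
  exact ⟨Z, hZ, hE1.trans hE, Good.congr sol hg1 hE⟩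

lemma Im_meas (hl : Continuous fl) (hr : Continuous fr) {Z : ℝ → ℝ} (hZ : Continuous Z) :
    Measurable fun τ => deriv Z τ * sol.vm (Z τ) τ - fxm fl fr (Z τ) (sol.vm (Z τ) τ) := by
  have h : Measurable fun τ => sol.vm (Z τ) τ :=
    sol.vm_meas.comp (hZ.measurable.prodMk measurable_id)
  exact ((measurable_deriv Z).mul h).sub ((fxm_meas hl hr).comp (hZ.measurable.prodMk h))

lemma Ip_meas (hl : Continuous fl) (hr : Continuous fr) {Z : ℝ → ℝ} (hZ : Continuous Z) :
    Measurable fun τ => deriv Z τ * sol.vp (Z τ) τ - dflux fl fr (Z τ) (sol.vp (Z τ) τ) := by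
  have h : Measurable fun τ => sol.vp (Z τ) τ :=
    sol.vp_meas.comp (hZ.measurable.prodMk measurable_id)
  exact ((measurable_deriv Z).mul h).sub ((dflux_meas hl hr).comp (hZ.measurable.prodMk h))

lemma I_bd {d v w K : ℝ} (hd : |d| ≤ K) (hv : |v| ≤ M) (hw : |w| ≤ N) :
    |d * v - w| ≤ K * M + N := by
  refine (abs_sub _ _).trans (add_le_add ?_ hw)
  rw [abs_mul]
  exact mul_le_mul hd hv (abs_nonneg _) ((abs_nonneg _).trans hd)

lemma cmp (hl : Continuous fl) (hr : Continuous fr) (hM : ∀ x t, |sol.u x t| ≤ M)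
    (hN : ∀ v, |v| ≤ M → |fl v| ≤ N ∧ |fr v| ≤ N) (hMN : M ≤ N)
    {Z : ℝ → ℝ} {K : NNReal} (hZ : LipschitzWith K Z) (hG : sol.Good T Z)
    {h : ℝ → ℝ} {C : ℝ} (hh : ∀ p q, |h p - h q| ≤ C * |p - q|)
    (s t : ℝ) (hs : 0 < s) (hst : s ≤ t) (htT : t ≤ T)
    (hle : ∀ τ ∈ Icc s t,
      ((Z τ < 0 → HasDerivAt Z (deriv fl (sol.vm (Z τ) τ)) τ) ∧
      (0 < Z τ → HasDerivAt Z (deriv fr (sol.vm (Z τ) τ)) τ) ∧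
      (Z τ = 0 → HasDerivAt Z 0 τ ∧ fl (sol.vm 0 τ) = fl A)) →
      deriv h τ ≤ deriv Z τ * sol.vm (Z τ) τ - fxm fl fr (Z τ) (sol.vm (Z τ) τ)) :
    h t - h s ≤ sol.U (Z t) t - sol.U (Z s) s := by
  have hC0 : 0 ≤ C := by
    have := (abs_nonneg _).trans (hh 1 0)
    simpa using this
  have hhL : LipschitzWith ⟨C, hC0⟩ h := LipschitzWith.of_dist_le_mul fun p q => by
    rw [Real.dist_eq, Real.dist_eq]; exact hh p q
  rw [sol.chain_um hl hr hM hN hMN hZ s t hs hst,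
    ← ((hhL.lipschitzOnWith (s := uIcc s t)).absolutelyContinuousOnInterval).integral_deriv_eq_sub]
  refine intervalIntegral.integral_mono_ae_restrict hst ?_ ?_ ?_
  · exact bdd_ii (M := C) (measurable_deriv h) (fun τ => norm_deriv_le_of_lipschitz hhL) _ _
  · exact bdd_ii (sol.Im_meas hl hr hZ.continuous) (fun τ => I_bd (norm_deriv_le_of_lipschitz hZ)
      (sol.vm_bd hM _ _) (fxm_bd hN _ _ (sol.vm_bd hM _ _))) _ _
  · rw [← restrict_Ioo_eq_restrict_Icc]
    refine (ae_restrict_iff' measurableSet_Ioo).2 ?_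
    filter_upwards [hG] with τ hτ hm
    exact hle τ ⟨hm.1.le, hm.2.le⟩ (hτ ⟨hs.trans hm.1, hm.2.trans_le htT⟩)

lemma bl (hl : Continuous fl) (hr : Continuous fr) (hM : ∀ x t, |sol.u x t| ≤ M)
    (hN : ∀ v, |v| ≤ M → |fl v| ≤ N ∧ |fr v| ≤ N) (hMN : M ≤ N)
    (htl : ∀ v w, fl v + deriv fl v * (w - v) ≤ fl w)
    {Z : ℝ → ℝ} {K : NNReal} (hZ : LipschitzWith K Z) (hG : sol.Good T Z)
    (s t : ℝ) (hs : 0 < s) (hst : s ≤ t) (htT : t ≤ T) (hneg : ∀ τ ∈ Icc s t, Z τ < 0) (w : ℝ) :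
    (w * Z t - fl w * t) - (w * Z s - fl w * s) ≤ sol.U (Z t) t - sol.U (Z s) s := by
  refine sol.cmp hl hr hM hN hMN hZ hG (h := fun q => w * Z q - fl w * q)
    (C := |w| * K + |fl w|) (fun p q => ?_) s t hs hst htT ?_
  · have e : w * Z p - fl w * p - (w * Z q - fl w * q) = w * (Z p - Z q) - fl w * (p - q) := by ring
    rw [e]
    refine (abs_sub _ _).trans ?_
    rw [abs_mul, abs_mul, add_mul, mul_assoc]
    have := hZ.dist_le_mul p q
    rw [Real.dist_eq, Real.dist_eq] at this
    gcongr
  · intro τ hτ ⟨h1, _, _⟩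
    have hz := hneg τ hτ
    have hd := h1 hz
    have := ((hd.const_mul w).sub ((hasDerivAt_id τ).const_mul (fl w))).deriv
    have e : deriv (fun q => w * Z q - fl w * q) τ = w * deriv fl (sol.vm (Z τ) τ) - fl w * 1 := this
    rw [e, hd.deriv, fxm, if_pos hz.le]
    have := htl (sol.vm (Z τ) τ) w
    linarith

lemma br (hl : Continuous fl) (hr : Continuous fr) (hM : ∀ x t, |sol.u x t| ≤ M)
    (hN : ∀ v, |v| ≤ M → |fl v| ≤ N ∧ |fr v| ≤ N) (hMN : M ≤ N)
    (htr : ∀ v w, fr v + deriv fr v * (w - v) ≤ fr w)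
    {Z : ℝ → ℝ} {K : NNReal} (hZ : LipschitzWith K Z) (hG : sol.Good T Z)
    (s t : ℝ) (hs : 0 < s) (hst : s ≤ t) (htT : t ≤ T) (hneg : ∀ τ ∈ Icc s t, 0 < Z τ) (w : ℝ) :
    (w * Z t - fr w * t) - (w * Z s - fr w * s) ≤ sol.U (Z t) t - sol.U (Z s) s := by
  refine sol.cmp hl hr hM hN hMN hZ hG (h := fun q => w * Z q - fr w * q)
    (C := |w| * K + |fr w|) (fun p q => ?_) s t hs hst htT ?_
  · have e : w * Z p - fr w * p - (w * Z q - fr w * q) = w * (Z p - Z q) - fr w * (p - q) := by ring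
    rw [e]
    refine (abs_sub _ _).trans ?_
    rw [abs_mul, abs_mul, add_mul, mul_assoc]
    have := hZ.dist_le_mul p q
    rw [Real.dist_eq, Real.dist_eq] at this
    gcongr
  · intro τ hτ ⟨_, h1, _⟩
    have hz := hneg τ hτ
    have hd := h1 hz
    have := ((hd.const_mul w).sub ((hasDerivAt_id τ).const_mul (fr w))).deriv
    have e : deriv (fun q => w * Z q - fr w * q) τ = w * deriv fr (sol.vm (Z τ) τ) - fr w * 1 := this
    rw [e, hd.deriv, fxm, if_neg (not_le.2 hz)]
    have := htr (sol.vm (Z τ) τ) w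
    linarith

lemma ba (hl : Continuous fl) (hr : Continuous fr) (hM : ∀ x t, |sol.u x t| ≤ M)
    (hN : ∀ v, |v| ≤ M → |fl v| ≤ N ∧ |fr v| ≤ N) (hMN : M ≤ N) (hAB : fl A = fr B)
    (htl : ∀ v w, fl v + deriv fl v * (w - v) ≤ fl w)
    (htr : ∀ v w, fr v + deriv fr v * (w - v) ≤ fr w)
    {Z : ℝ → ℝ} {K : NNReal} (hZ : LipschitzWith K Z) (hG : sol.Good T Z)
    (s t : ℝ) (hs : 0 < s) (hst : s ≤ t) (htT : t ≤ T) :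
    (Gam A B (Z t) - fl A * t) - (Gam A B (Z s) - fl A * s) ≤ sol.U (Z t) t - sol.U (Z s) s := by
  refine sol.cmp hl hr hM hN hMN hZ hG (h := fun q => Gam A B (Z q) - fl A * q)
    (C := (|A| + |B|) * K + |fl A|) (fun p q => ?_) s t hs hst htT ?_
  · have e : Gam A B (Z p) - fl A * p - (Gam A B (Z q) - fl A * q) =
      (Gam A B (Z p) - Gam A B (Z q)) - fl A * (p - q) := by ring
    rw [e]
    refine (abs_sub _ _).trans ?_
    rw [abs_mul, add_mul, mul_assoc]
    refine add_le_add ((Gam_lip A B _ _).trans ?_) le_rfl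
    have := hZ.dist_le_mul p q
    rw [Real.dist_eq, Real.dist_eq] at this
    gcongr
  · intro τ hτ ⟨h1, h2, h3⟩
    rcases lt_trichotomy (Z τ) 0 with hz | hz | hz
    · have hd := h1 hz
      have h4 : HasDerivAt (fun q => Gam A B (Z q)) (A * deriv fl (sol.vm (Z τ) τ)) τ := by
        refine (hd.const_mul A).congr_of_eventuallyEq ?_
        filter_upwards [hd.continuousAt.eventually (gt_mem_nhds hz)] with q hq
        exact if_pos hq
      have e : deriv (fun q => Gam A B (Z q) - fl A * q) τ =
          A * deriv fl (sol.vm (Z τ) τ) - fl A * 1 :=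
        (h4.sub ((hasDerivAt_id τ).const_mul (fl A))).deriv
      rw [e, hd.deriv, fxm, if_pos hz.le]
      have := htl (sol.vm (Z τ) τ) A
      linarith
    · obtain ⟨hd, hf⟩ := h3 hz
      have e : deriv (fun q => Gam A B (Z q) - fl A * q) τ = 0 - fl A * 1 :=
        ((lip_comp_zero (Gam_lip A B) hd).sub ((hasDerivAt_id τ).const_mul (fl A))).deriv
      rw [e, hd.deriv, fxm, if_pos hz.le, hz, hf]
      linarith
    · have hd := h2 hz
      have h4 : HasDerivAt (fun q => Gam A B (Z q)) (B * deriv fr (sol.vm (Z τ) τ)) τ := by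
        refine (hd.const_mul B).congr_of_eventuallyEq ?_
        filter_upwards [hd.continuousAt.eventually (lt_mem_nhds hz)] with q hq
        exact if_neg (not_lt.2 (le_of_lt hq))
      have e : deriv (fun q => Gam A B (Z q) - fl A * q) τ =
          B * deriv fr (sol.vm (Z τ) τ) - fl A * 1 :=
        (h4.sub ((hasDerivAt_id τ).const_mul (fl A))).deriv
      rw [e, hd.deriv, fxm, if_neg (not_le.2 hz), hAB]
      have := htr (sol.vm (Z τ) τ) B
      linarith

end ABSol

lemma deriv_nonneg_right {h : ℝ → ℝ} {d t : ℝ} (hd : HasDerivAt h d t)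
    (hr : ∀ᶠ q in 𝓝[>] t, h t ≤ h q) : 0 ≤ d := by
  have h1 := (hasDerivAt_iff_tendsto_slope.1 hd).mono_left
    (nhdsWithin_mono t (show Ioi t ⊆ {t}ᶜ from fun y hy => ne_of_gt hy))
  refine ge_of_tendsto h1 ?_
  filter_upwards [self_mem_nhdsWithin, hr] with y hy hy2
  rw [slope_def_field]
  exact div_nonneg (sub_nonneg.2 hy2) (sub_nonneg.2 (le_of_lt hy))

lemma ae_deriv_D {D I : ℝ → ℝ} {M : ℝ} (hm : Measurable I) (hb : ∀ x, |I x| ≤ M)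
    (hD : ∀ s t, 0 < s → s ≤ t → D t - D s = ∫ τ in s..t, I τ) :
    ∀ᵐ t : ℝ, 0 < t → HasDerivAt D (I t) t := by
  filter_upwards [_root_.LocallyIntegrable.ae_hasDerivAt_integral (bdd_li hm hb)] with t ht ht0
  refine ((ht 1).const_add (D 1)).congr_of_eventuallyEq ?_
  filter_upwards [lt_mem_nhds ht0] with q hq
  rcases le_total 1 q with h | h
  · have := hD 1 q one_pos h
    linarith
  · have h1 := hD q 1 hq h
    rw [intervalIntegral.integral_symm]
    linarith

lemma legendre_eq {f : ℝ → ℝ} {d v : ℝ} (hf : DifferentiableAt ℝ f v)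
    (h : ∀ w, d * w - f w ≤ d * v - f v) : deriv f v = d := by
  have h1 : HasDerivAt (fun w => d * w - f w) (d * 1 - deriv f v) v :=
    ((hasDerivAt_id v).const_mul d).sub hf.hasDerivAt
  have h2 : IsLocalMax (fun w => d * w - f w) v := Eventually.of_forall h
  have := h2.hasDerivAt_eq_zero h1
  linarith

namespace ABSol
variable {fl fr : ℝ → ℝ} {A B : ℝ} {u0 : ℝ → ℝ} (sol : ABSol fl fr A B u0) {M N T : ℝ}

lemma U_cont (hM : ∀ x t, |sol.u x t| ≤ M) (t : ℝ) : Continuous fun x => sol.U x t := by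
  have hM0 : 0 ≤ M := (abs_nonneg _).trans (hM 0 0)
  have : LipschitzWith ⟨M, hM0⟩ fun x => sol.U x t :=
    LipschitzWith.of_dist_le_mul fun x y => by
      rw [Real.dist_eq, Real.dist_eq, sol.hUx hM, ← Real.norm_eq_abs]
      exact intervalIntegral.norm_integral_le_of_norm_le_const fun z _ => hM z t
  exact this.continuous

/-- a calibrated Lipschitz curve is a gic -/
lemma gic_of_ineq (hl : Differentiable ℝ fl) (hr : Differentiable ℝ fr)
    (hM : ∀ x t, |sol.u x t| ≤ M)
    (hN : ∀ v, |v| ≤ M → |fl v| ≤ N ∧ |fr v| ≤ N) (hMN : M ≤ N) (hAB : fl A = fr B)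
    (hA : ∀ v, v ≤ A → fl A ≤ fl v) (hB : ∀ v, B ≤ v → fr B ≤ fr v)
    {Z : ℝ → ℝ} {K : NNReal} (hZ : LipschitzWith K Z)
    (ha : ∀ s t, 0 < s → s ≤ t → t ≤ T →
      (Gam A B (Z t) - fl A * t) - (Gam A B (Z s) - fl A * s) ≤ sol.U (Z t) t - sol.U (Z s) s)
    (hbl : ∀ s, 0 < s → s < T → Z s < 0 → ∀ᶠ t in 𝓝[>] s, ∀ w,
      (w * Z t - fl w * t) - (w * Z s - fl w * s) ≤ sol.U (Z t) t - sol.U (Z s) s)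
    (hbr : ∀ s, 0 < s → s < T → 0 < Z s → ∀ᶠ t in 𝓝[>] s, ∀ w,
      (w * Z t - fr w * t) - (w * Z s - fr w * s) ≤ sol.U (Z t) t - sol.U (Z s) s) :
    IsABgic T fl fr (fl A) sol Z := by
  refine ⟨⟨K, hZ.lipschitzOnWith⟩, ?_⟩
  rw [← restrict_Ioo_eq_restrict_Icc, ae_restrict_iff' measurableSet_Ioo]
  have cl := hl.continuous
  have cr := hr.continuous
  have d1 := ae_deriv_D (D := fun t => sol.U (Z t) t) (sol.Im_meas cl cr hZ.continuous)
    (fun τ => I_bd (norm_deriv_le_of_lipschitz hZ)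
      (sol.vm_bd hM _ _) (fxm_bd hN _ _ (sol.vm_bd hM _ _))) (sol.chain_um cl cr hM hN hMN hZ)
  have d2 := ae_deriv_D (D := fun t => sol.U (Z t) t) (sol.Ip_meas cl cr hZ.continuous)
    (fun τ => I_bd (norm_deriv_le_of_lipschitz hZ)
      (sol.vp_bd hM _ _) (dflux_bd hN _ _ (sol.vp_bd hM _ _))) (sol.chain_up cl cr hM hN hMN hZ)
  filter_upwards [d1, d2, hZ.ae_differentiableAt_real, ae_deriv_zero Z,
    sol.rh_ae cl cr hM hN hMN, sol.ent_ae cl cr hM hN hMN hAB hA hB] with t d1 d2 hd h0 hrh hent ht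
  have d1 := d1 ht.1
  have d2 := d2 ht.1
  have hrh := hrh ht.1
  have hent := hent ht.1
  have hdZ := hd.hasDerivAt
  rw [sol.vm_pos ht.1] at d1
  rw [sol.vp_pos ht.1] at d2
  refine ⟨fun hz => ?_, fun hz => ?_, fun hz => ?_⟩
  · rw [fxm, if_pos hz.le] at d1
    rw [dflux, if_pos hz] at d2
    have key : ∀ I w, HasDerivAt (fun t => sol.U (Z t) t) I t → deriv Z t * w - fl w ≤ I := by
      intro I w hI
      have h1 : HasDerivAt (fun q => sol.U (Z q) q - (w * Z q - fl w * q))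
          (I - (w * deriv Z t - fl w * 1)) t :=
        hI.sub ((hdZ.const_mul w).sub ((hasDerivAt_id t).const_mul (fl w)))
      have := deriv_nonneg_right h1 (by
        filter_upwards [hbl t ht.1 ht.2 hz] with q hq
        have := hq w
        linarith)
      linarith
    have e1 := legendre_eq (hl _) fun w => key _ w d1
    have e2 := legendre_eq (hl _) fun w => key _ w d2
    rw [e1, e2]
    exact ⟨hdZ, rfl⟩
  · rw [fxm, if_neg (not_le.2 hz)] at d1
    rw [dflux, if_neg (not_lt.2 hz.le)] at d2
    have key : ∀ I w, HasDerivAt (fun t => sol.U (Z t) t) I t → deriv Z t * w - fr w ≤ I := by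
      intro I w hI
      have h1 : HasDerivAt (fun q => sol.U (Z q) q - (w * Z q - fr w * q))
          (I - (w * deriv Z t - fr w * 1)) t :=
        hI.sub ((hdZ.const_mul w).sub ((hasDerivAt_id t).const_mul (fr w)))
      have := deriv_nonneg_right h1 (by
        filter_upwards [hbr t ht.1 ht.2 hz] with q hq
        have := hq w
        linarith)
      linarith
    have e1 := legendre_eq (hr _) fun w => key _ w d1
    have e2 := legendre_eq (hr _) fun w => key _ w d2
    rw [e1, e2]
    exact ⟨hdZ, rfl⟩
  · have hz0 := h0 hz _ hdZ
    rw [hz0] at hdZ d1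
    rw [fxm, if_pos hz.le, hz] at d1
    have h1 : HasDerivAt (fun q => sol.U (Z q) q - (Gam A B (Z q) - fl A * q))
        ((0 * sol.um 0 t - fl (sol.um 0 t)) - (0 - fl A * 1)) t :=
      d1.sub ((lip_comp_zero (Gam_lip A B) hdZ).sub ((hasDerivAt_id t).const_mul (fl A)))
    have := deriv_nonneg_right h1 (by
      filter_upwards [self_mem_nhdsWithin, nhdsWithin_le_nhds (gt_mem_nhds ht.2)] with q hq hqT
      have := ha t q ht.1 (le_of_lt hq) (le_of_lt hqT)
      linarith)
    have e : fl (sol.um 0 t) = fl A := by linarith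
    exact ⟨e, hrh ▸ e⟩

end ABSol

theorem closed_graph_aux
    {T a A B : ℝ} {fl fr : ℝ → ℝ}
    (hT : 0 < T)
    (hflC : ContDiff ℝ 2 fl) (hfrC : ContDiff ℝ 2 fr)
    (ha : 0 < a)
    (hfl2 : ∀ w : ℝ, a ≤ deriv (deriv fl) w)
    (hfr2 : ∀ w : ℝ, a ≤ deriv (deriv fr) w)
    (hAB : fl A = fr B) (hA' : deriv fl A ≤ 0) (hB' : 0 ≤ deriv fr B)
    {u0 : ℝ → ℝ} (sol : ABSol fl fr A B u0)
    (xs : ℕ → ℝ) (x : ℝ) (ys : ℕ → ℝ) (y : ℝ)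
    (hx : Tendsto xs atTop (nhds x))
    (hmem : ∀ n, ys n ∈ charSet0 T fl fr (fl A) sol (xs n))
    (hy : Tendsto ys atTop (nhds y)) :
    y ∈ charSet0 T fl fr (fl A) sol x := by
  obtain ⟨M, hM⟩ := sol.bdd
  have hdl : Differentiable ℝ fl := hflC.differentiable (by norm_num)
  have hdr : Differentiable ℝ fr := hfrC.differentiable (by norm_num)
  have cl := hdl.continuous
  have cr := hdr.continuous
  have htl := tang hflC ha hfl2
  have htr := tang hfrC ha hfr2
  have hA : ∀ v, v ≤ A → fl A ≤ fl v := fun v hv => by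
    have := htl A v
    nlinarith [mul_nonneg_of_nonpos_of_nonpos hA' (sub_nonpos.2 hv)]
  have hB : ∀ v, B ≤ v → fr B ≤ fr v := fun v hv => by
    have := htr B v
    nlinarith [mul_nonneg hB' (sub_nonneg.2 hv)]
  have bnd : ∀ g : ℝ → ℝ, Continuous g → ∃ C, ∀ v, |v| ≤ M → |g v| ≤ C := by
    intro g hg
    obtain ⟨C, hC⟩ := (isCompact_Icc (a := -M) (b := M)).exists_bound_of_continuousOn hg.continuousOn
    exact ⟨C, fun v hv => hC v (abs_le.1 hv)⟩
  obtain ⟨C1, h1⟩ := bnd fl cl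
  obtain ⟨C2, h2⟩ := bnd fr cr
  obtain ⟨C3, h3⟩ := bnd _ (hflC.continuous_deriv (by norm_num))
  obtain ⟨C4, h4⟩ := bnd _ (hfrC.continuous_deriv (by norm_num))
  set N : ℝ := max M (max C1 C2) with hNdef
  have hMN : M ≤ N := le_max_left _ _
  have hN : ∀ v, |v| ≤ M → |fl v| ≤ N ∧ |fr v| ≤ N := fun v hv =>
    ⟨(h1 v hv).trans ((le_max_left _ _).trans (le_max_right _ _)),
      (h2 v hv).trans ((le_max_right _ _).trans (le_max_right _ _))⟩
  set K : NNReal := Real.toNNReal (max C3 C4) with hKdef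
  have hK : ∀ v, |v| ≤ M → |deriv fl v| ≤ K ∧ |deriv fr v| ≤ K := fun v hv =>
    ⟨(h3 v hv).trans ((le_max_left _ _).trans (Real.le_coe_toNNReal _)),
      (h4 v hv).trans ((le_max_right _ _).trans (Real.le_coe_toNNReal _))⟩
  have hex : ∀ n, ∃ Z, LipschitzWith K Z ∧ Z 0 = ys n ∧ Z T = xs n ∧ sol.Good T Z := by
    intro n
    obtain ⟨ζ, ⟨hζ, hζT⟩, hζ0⟩ := hmem n
    obtain ⟨Z, hZ, hE, hG⟩ := sol.gic_ext hM hK hT hζ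
    exact ⟨Z, hZ, (hE ⟨le_rfl, hT.le⟩).symm.trans hζ0, (hE ⟨hT.le, le_rfl⟩).symm.trans hζT, hG⟩
  choose Z hZ hZ0 hZT hG using hex
  have hZL : ∀ n p q, |Z n p - Z n q| ≤ K * |p - q| := fun n p q => by
    have := (hZ n).dist_le_mul p q
    rwa [Real.dist_eq, Real.dist_eq] at this
  set 𝒰 : Ultrafilter ℕ := hyperfilter ℕ with h𝒰
  have h𝒰le : (𝒰 : Filter ℕ) ≤ atTop := Nat.hyperfilter_le_atTop
  obtain ⟨R, hR⟩ : ∃ R, ∀ n, |ys n| ≤ R := by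
    obtain ⟨R, hR⟩ := (Metric.isBounded_range_of_tendsto ys hy).exists_norm_le
    exact ⟨R, fun n => hR _ (mem_range_self n)⟩
  have hlim : ∀ t, ∃ z, Tendsto (fun n => Z n t) 𝒰 (𝓝 z) := by
    intro t
    obtain ⟨z, _, hz⟩ := (isCompact_Icc (a := -(R + K * |t|)) (b := R + K * |t|)).ultrafilter_le_nhds
      (𝒰.map fun n => Z n t) (by
        rw [le_principal_iff]
        refine Filter.mem_map.2 (Filter.univ_mem' fun n => ?_)
        refine abs_le.1 ?_
        have e : Z n t = ys n + (Z n t - Z n 0) := by rw [hZ0]; ring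
        have := hZL n t 0
        rw [sub_zero] at this
        show |Z n t| ≤ _
        rw [e]
        exact (abs_add_le _ _).trans (add_le_add (hR n) this))
    exact ⟨z, hz⟩
  choose ζ hζ using hlim
  have hζL : LipschitzWith K ζ := LipschitzWith.of_dist_le_mul fun p q => by
    rw [Real.dist_eq, Real.dist_eq]
    exact le_of_tendsto ((hζ p).sub (hζ q)).abs (Eventually.of_forall fun n => hZL n p q)
  have hζ0 : ζ 0 = y := by
    refine tendsto_nhds_unique (hζ 0) ?_
    simp_rw [hZ0]
    exact hy.mono_left h𝒰le
  have hζT : ζ T = x := by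
    refine tendsto_nhds_unique (hζ T) ?_
    simp_rw [hZT]
    exact hx.mono_left h𝒰le
  have hUl : ∀ s t, Tendsto (fun n => sol.U (Z n t) t - sol.U (Z n s) s) 𝒰
      (𝓝 (sol.U (ζ t) t - sol.U (ζ s) s)) := fun s t =>
    (((sol.U_cont hM t).tendsto _).comp (hζ t)).sub (((sol.U_cont hM s).tendsto _).comp (hζ s))
  have hGc : Continuous (Gam A B) := by
    have : Gam A B = fun x => A * min x 0 + B * max x 0 := funext (Gam_eq A B)
    rw [this]; fun_prop
  refine ⟨ζ, ⟨?_, hζT⟩, hζ0⟩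
  refine sol.gic_of_ineq hdl hdr hM hN hMN hAB hA hB hζL ?_ ?_ ?_
  · intro s t hs hst htT
    refine le_of_tendsto_of_tendsto ?_ (hUl s t) (Eventually.of_forall fun n =>
      sol.ba cl cr hM hN hMN hAB htl htr (hZ n) (hG n) s t hs hst htT)
    exact (((hGc.tendsto _).comp (hζ t)).sub_const _).sub (((hGc.tendsto _).comp (hζ s)).sub_const _)
  · intro s hs hsT hneg
    have hn : ∀ᶠ n in (𝒰 : Filter ℕ), Z n s < ζ s / 2 :=
      (hζ s).eventually (gt_mem_nhds (by linarith))
    have hc : ∀ᶠ t in 𝓝 s, ζ s / 2 + K * |t - s| < 0 := by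
      have : Continuous fun t : ℝ => ζ s / 2 + K * |t - s| := by fun_prop
      refine this.continuousAt.eventually (gt_mem_nhds ?_)
      simp; linarith
    filter_upwards [self_mem_nhdsWithin, nhdsWithin_le_nhds (gt_mem_nhds hsT),
      nhdsWithin_le_nhds hc] with t ht htT htc w
    have ht : s < t := ht
    refine le_of_tendsto_of_tendsto ?_ (hUl s t) (hn.mono fun n hn =>
      sol.bl cl cr hM hN hMN htl (hZ n) (hG n) s t hs ht.le (le_of_lt htT) ?_ w)
    · exact (((hζ t).const_mul w).sub_const _).sub (((hζ s).const_mul w).sub_const _)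
    · intro τ hτ
      have h5 := (le_abs_self _).trans (hZL n τ s)
      have h6 : |τ - s| ≤ |t - s| := by
        rw [abs_of_nonneg (sub_nonneg.2 hτ.1), abs_of_nonneg (sub_nonneg.2 ht.le)]
        linarith [hτ.2]
      have h7 := mul_le_mul_of_nonneg_left h6 K.2
      have htc : ζ s / 2 + K * |t - s| < 0 := htc
      have h7 : (K:ℝ) * |τ - s| ≤ K * |t - s| := h7
      linarith
  · intro s hs hsT hneg
    have hn : ∀ᶠ n in (𝒰 : Filter ℕ), ζ s / 2 < Z n s :=
      (hζ s).eventually (lt_mem_nhds (by linarith))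
    have hc : ∀ᶠ t in 𝓝 s, 0 < ζ s / 2 - K * |t - s| := by
      have : Continuous fun t : ℝ => ζ s / 2 - K * |t - s| := by fun_prop
      refine this.continuousAt.eventually (lt_mem_nhds ?_)
      simp; linarith
    filter_upwards [self_mem_nhdsWithin, nhdsWithin_le_nhds (gt_mem_nhds hsT),
      nhdsWithin_le_nhds hc] with t ht htT htc w
    have ht : s < t := ht
    refine le_of_tendsto_of_tendsto ?_ (hUl s t) (hn.mono fun n hn =>
      sol.br cl cr hM hN hMN htr (hZ n) (hG n) s t hs ht.le (le_of_lt htT) ?_ w)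
    · exact (((hζ t).const_mul w).sub_const _).sub (((hζ s).const_mul w).sub_const _)
    · intro τ hτ
      have h5 := (neg_abs_le _).trans' (neg_le_neg (hZL n τ s))
      have h6 : |τ - s| ≤ |t - s| := by
        rw [abs_of_nonneg (sub_nonneg.2 hτ.1), abs_of_nonneg (sub_nonneg.2 ht.le)]
        linarith [hτ.2]
      have h7 := mul_le_mul_of_nonneg_left h6 K.2
      have htc : 0 < ζ s / 2 - K * |t - s| := htc
      have h7 : (K:ℝ) * |τ - s| ≤ K * |t - s| := h7
      linarith

/-- the set-valued map `x ↦ C₀(u,x)` has closed graph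
(Proposition 4.1 (iii) of the paper). -/
theorem charSet0_closed_graph
    {T a θl θr A B : ℝ} {fl fr : ℝ → ℝ}
    (hT : 0 < T)
    (hflC : ContDiff ℝ 2 fl) (hfrC : ContDiff ℝ 2 fr)
    (ha : 0 < a)
    (hfl2 : ∀ w : ℝ, a ≤ deriv (deriv fl) w)
    (hfr2 : ∀ w : ℝ, a ≤ deriv (deriv fr) w)
    (hf0 : fl 0 = fr 0) (hf1 : fl 1 = fr 1)
    (hθl : deriv fl θl = 0) (hθr : deriv fr θr = 0)
    (hθl0 : 0 ≤ θl) (hθr1 : θr ≤ 1)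
    (hAB : fl A = fr B) (hA' : deriv fl A ≤ 0) (hB' : 0 ≤ deriv fr B)
    {u0 : ℝ → ℝ} (hu0 : IsLinf u0) (sol : ABSol fl fr A B u0)
    (xs : ℕ → ℝ) (x : ℝ) (ys : ℕ → ℝ) (y : ℝ)
    (hx : Tendsto xs atTop (nhds x))
    (hmem : ∀ n, ys n ∈ charSet0 T fl fr (fl A) sol (xs n))
    (hy : Tendsto ys atTop (nhds y)) :
    y ∈ charSet0 T fl fr (fl A) sol x := by
  exact closed_graph_aux hT hflC hfrC ha hfl2 hfr2 hAB hA' hB' sol xs x ys y hx hmem hy
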